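/- Let q > 7, let B be a Baer subplane of PG(2,q²) tangent to ℓ∞ at T̄ = B ∩ ℓ∞, and let C be an F_q-conic contained in B with T̄ ∉ C. Then φ(C) is a 4-dimensional normal rational curve N of PG(4,q) disjoint from Σ∞, and the extension of N to PG(4,q⁴) meets the hyperplane z = 0 only in points of g✶ ∪ (g^q)✶. More precisely: if C⁺ meets ℓ∞ in two distinct points P̄, Q̄ then the extension of N to PG(4,q²) contains the two points P, Q of g; if C⁺ is tangent to ℓ∞ at P̄ then the extension of N to PG(4,q²) meets g exactly in the point P; and if C⁺ ∩ ℓ∞ = ∅ then the extension of N to PG(4,q²) is disjoint from the hyperplane z = 0 and the extension of N to PG(4,q⁴) meets g✶ in two points of g✶ ∖ g. -/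

import Mathlib

open scoped Classical
open Matrix

noncomputable section

namespace BaerConics

/-- Points of the projective space `PG(n-1, K)` as projectivization of `Fin n → K`. -/
abbrev PP (K : Type) [Field K] (n : ℕ) : Type := Projectivization K (Fin n → K)

variable {K : Type} [Field K] {m n : ℕ}

/-- The (at most one) projective point determined by a vector:  empty if `v = 0`,
and the singleton `{[v]}` otherwise. -/
def projPt (v : Fin n → K) : Set (PP K n) :=
  {p | ∃ h : v ≠ 0, p = Projectivization.mk K v h}

/-- The set of projective points lying in a linear subspace. -/
def ptsOf (W : Submodule K (Fin n → K)) : Set (PP K n) :=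
  {p | p.rep ∈ W}

/-- The projective line through two points (as the set of points of the span). -/
def lineTh (P Q : PP K n) : Set (PP K n) :=
  ptsOf (Submodule.span K {P.rep, Q.rep})

/-- `X` is a projective flat of projective dimension `d`. -/
def IsFlat (d : ℕ) (X : Set (PP K n)) : Prop :=
  ∃ W : Submodule K (Fin n → K), Module.finrank K W = d + 1 ∧ X = ptsOf W

/-- Image of a set of vectors under the projective map induced by a matrix. -/
def mimg (M : Matrix (Fin m) (Fin n) K) (X : Set (Fin n → K)) : Set (PP K m) :=
  {p | ∃ v ∈ X, p ∈ projPt (M.mulVec v)}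

/-- Coordinatewise application of a ring homomorphism to a vector. -/
def mapVec {L : Type} [Field L] (σ : K →+* L) (v : Fin n → K) : Fin n → L :=
  fun i => σ (v i)

lemma mulVec_inj (M : Matrix (Fin n) (Fin n) K) (hM : IsUnit M.det) :
    Function.Injective M.mulVec := by
  intro a b hab
  have h := congrArg (fun v => M⁻¹.mulVec v) hab
  simpa [Matrix.mulVec_mulVec, Matrix.nonsing_inv_mul M hM] using h

/-- The projective transformation induced by an invertible matrix. -/
def pmap (M : Matrix (Fin n) (Fin n) K) (hM : IsUnit M.det) (p : PP K n) : PP K n :=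
  Projectivization.mk K (M.mulVec p.rep) (by
    intro h
    apply p.rep_nonzero
    have h0 : M.mulVec p.rep = M.mulVec 0 := by simpa [Matrix.mulVec_zero] using h
    exact mulVec_inj M hM h0)

/-- The map induced on projective points by the coordinatewise `q`-power map. -/
def frobPt (q : ℕ) (p : PP K n) : PP K n :=
  Projectivization.mk K (fun i => p.rep i ^ q) (by
    obtain ⟨i, hi⟩ := Function.ne_iff.mp p.rep_nonzero
    intro h
    exact pow_ne_zero q (by simpa using hi) (by simpa using congrFun h i))

/-- The line at infinity `z = 0` of `PG(2, K)`. -/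
def linf (K : Type) [Field K] : Set (PP K 3) := {p | p.rep 2 = 0}

/-- Coordinatewise application of the algebra map to a vector. -/
def algVec (F : Type) {K : Type} [Field F] [Field K] [Algebra F K] {n : ℕ}
    (v : Fin n → F) : Fin n → K := fun i => algebraMap F K (v i)

/-- Vectors representing the points of the standard Baer subline of `ℓ∞`. -/
def sublineVecs (F K : Type) [Field F] [Field K] [Algebra F K] : Set (Fin 3 → K) :=
  {v | ∃ θ : F, v = ![algebraMap F K θ, 1, 0]} ∪ {![1, 0, 0]}

/-- Nonzero vectors representing the points of `ℓ∞`. -/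
def linfVecs (K : Type) [Field K] : Set (Fin 3 → K) := {v | v ≠ 0 ∧ v 2 = 0}

/-- Vectors with all coordinates in (the image of) `F`, representing the canonical
Baer subplane. -/
def subplaneVecs (F K : Type) [Field F] [Field K] [Algebra F K] : Set (Fin 3 → K) :=
  {v | ∃ w : Fin 3 → F, w ≠ 0 ∧ v = algVec F w}

/-- Vectors of the standard conic with parameters in `S`. -/
def conicVecs {K : Type} [Field K] (S : Set K) : Set (Fin 3 → K) :=
  {v | ∃ θ ∈ S, v = ![1, θ, θ ^ 2]} ∪ {![0, 0, 1]}

/-- `b` is a Baer subline of the line `ℓ` of `PG(2,q²)`. -/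
def IsBaerSublineOf (F : Type) {K : Type} [Field F] [Field K] [Algebra F K]
    (b ℓ : Set (PP K 3)) : Prop :=
  ∃ M : Matrix (Fin 3) (Fin 3) K, IsUnit M.det ∧
    ℓ = mimg M (linfVecs K) ∧ b = mimg M (sublineVecs F K)

/-- `B` is a Baer subplane of `PG(2,q²)`. -/
def IsBaerSubplane (F : Type) {K : Type} [Field F] [Field K] [Algebra F K]
    (B : Set (PP K 3)) : Prop :=
  ∃ M : Matrix (Fin 3) (Fin 3) K, IsUnit M.det ∧ B = mimg M (subplaneVecs F K)

/-- `C` is the image under `PGL(3,K)` of the standard conic with parameters in `S`. -/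
def IsConicOver {K : Type} [Field K] (S : Set K) (C : Set (PP K 3)) : Prop :=
  ∃ M : Matrix (Fin 3) (Fin 3) K, IsUnit M.det ∧ C = mimg M (conicVecs S)

/-- An `F_q`-conic of `PG(2,q²)`: a nondegenerate conic of a Baer subplane. -/
def IsFqConic (F : Type) {K : Type} [Field F] [Field K] [Algebra F K]
    (C : Set (PP K 3)) : Prop :=
  IsConicOver (Set.range (algebraMap F K)) C

/-- An `F_{q²}`-conic of `PG(2,q²)`: a nondegenerate conic. -/
def IsFq2Conic {K : Type} [Field K] (C : Set (PP K 3)) : Prop :=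
  IsConicOver (Set.univ : Set K) C

/-- `𝒦` is an `ℓ∞`-Baer pencil with vertex `P`. -/
def IsLinfBaerPencil (F : Type) {K : Type} [Field F] [Field K] [Algebra F K]
    (𝒦 : Set (PP K 3)) (P : PP K 3) : Prop :=
  P ∈ linf K ∧ ∃ ℓ b : Set (PP K 3), IsBaerSublineOf F b ℓ ∧ P ∉ ℓ ∧
    (∃! X, X ∈ b ∩ linf K) ∧ 𝒦 = ⋃ X ∈ b, lineTh P X

/-- `m` is a line of the Baer subplane `B`, with extension (full line) `ℓ`. -/
def IsLineOfExt {K : Type} [Field K] (q : ℕ) (B m ℓ : Set (PP K 3)) : Prop :=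
  IsFlat 1 ℓ ∧ m = B ∩ ℓ ∧ m.ncard = q + 1

/-- `m` is a line of the Baer subplane `B`. -/
def IsLineOf {K : Type} [Field K] (q : ℕ) (B m : Set (PP K 3)) : Prop :=
  ∃ ℓ, IsLineOfExt q B m ℓ

/-- `P` and `Q` are conjugate with respect to the Baer subline `b` of `ℓ∞`. -/
def ConjWrtSubline (F : Type) {K : Type} [Field F] [Field K] [Algebra F K]
    (q : ℕ) (b : Set (PP K 3)) (P Q : PP K 3) : Prop :=
  ∃ (M : Matrix (Fin 3) (Fin 3) K) (hM : IsUnit M.det),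
    mimg M (linfVecs K) = linf K ∧ b = mimg M (sublineVecs F K) ∧
    ∃ P₀ : PP K 3, P = pmap M hM P₀ ∧ Q = pmap M hM (frobPt q P₀)

/-- A representative vector for the point `(δ,1,0)` (resp. `(1,0,0)`) of `ℓ∞`. -/
def ptInfVec {K : Type} [Field K] : Option K → Fin 3 → K
  | some δ => ![δ, 1, 0]
  | none => ![1, 0, 0]

lemma ptInfVec_ne {K : Type} [Field K] (t : Option K) : ptInfVec t ≠ 0 := by
  cases t with
  | none => intro h; have h0 := congrFun h 0; simp [ptInfVec] at h0
  | some δ => intro h; have h0 := congrFun h 1; simp [ptInfVec] at h0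

/-- The point of `ℓ∞` with parameter `δ ∈ K ∪ {∞}`. -/
def ptInf {K : Type} [Field K] (t : Option K) : PP K 3 :=
  Projectivization.mk K (ptInfVec t) (ptInfVec_ne t)

/-- The hyperplane at infinity `z = 0` of `PG(4, F)`. -/
def sinf (F : Type) [Field F] : Set (PP F 5) := {p | p.rep 4 = 0}

/-- Affine coordinates of the Bruck-Bose image of an affine point of `PG(2,q²)`. -/
def bbVec {F K : Type} [Field F] [Field K] (c0 c1 : K → F) (p : PP K 3) : Fin 5 → F :=
  ![c0 (p.rep 0 / p.rep 2), c1 (p.rep 0 / p.rep 2),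
    c0 (p.rep 1 / p.rep 2), c1 (p.rep 1 / p.rep 2), 1]

/-- The Bruck-Bose map (meaningful on affine points of `PG(2,q²)`). -/
def bb {F K : Type} [Field F] [Field K] (c0 c1 : K → F) (p : PP K 3) : PP F 5 :=
  Projectivization.mk F (bbVec c0 c1 p) (by
    intro h
    have h4 := congrFun h 4
    simp [bbVec] at h4)

/-- First spanning vector of the spread line with parameter `δ ∈ K ∪ {∞}`. -/
def spreadV1 {F K : Type} [Field F] [Field K] (c0 c1 : K → F) : Option K → Fin 5 → F
  | some δ => ![c0 δ, c1 δ, 1, 0, 0]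
  | none => ![1, 0, 0, 0, 0]

/-- Second spanning vector of the spread line with parameter `δ ∈ K ∪ {∞}`. -/
def spreadV2 {F K : Type} [Field F] [Field K] (c0 c1 : K → F) (t0 t1 : F) :
    Option K → Fin 5 → F
  | some δ => ![t0 * c1 δ, c0 δ + t1 * c1 δ, 0, 1, 0]
  | none => ![0, 1, 0, 0, 0]

/-- The line of the regular spread `S` with parameter `δ ∈ K ∪ {∞}`. -/
def spreadLine {F K : Type} [Field F] [Field K] (c0 c1 : K → F) (t0 t1 : F)
    (t : Option K) : Set (PP F 5) :=
  ptsOf (Submodule.span F {spreadV1 c0 c1 t, spreadV2 c0 c1 t0 t1 t})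

/-- The extension `[T]⋆` of a spread line to `PG(4,q²)`. -/
def extSpreadLine (F : Type) {K : Type} [Field F] [Field K] [Algebra F K]
    (c0 c1 : K → F) (t0 t1 : F) (t : Option K) : Set (PP K 5) :=
  ptsOf (Submodule.span K
    {algVec F (spreadV1 c0 c1 t), algVec F (spreadV2 c0 c1 t0 t1 t)})

/-- The `K`-extension of an `F`-subspace. -/
def extSub (F : Type) {K : Type} [Field F] [Field K] [Algebra F K] {n : ℕ}
    (W : Submodule F (Fin n → F)) : Submodule K (Fin n → K) :=
  Submodule.span K (algVec F '' (W : Set (Fin n → F)))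

def A0v {K : Type} [Field K] (τ : K) (q : ℕ) : Fin 5 → K := ![τ ^ q, -1, 0, 0, 0]
def A1v {K : Type} [Field K] (τ : K) (q : ℕ) : Fin 5 → K := ![0, 0, τ ^ q, -1, 0]
def B0v {K : Type} [Field K] (τ : K) : Fin 5 → K := ![τ, -1, 0, 0, 0]
def B1v {K : Type} [Field K] (τ : K) : Fin 5 → K := ![0, 0, τ, -1, 0]

/-- The transversal line `g` of the regular spread, in `PG(4,q²)`. -/
def gline {K : Type} [Field K] (τ : K) (q : ℕ) : Set (PP K 5) :=
  ptsOf (Submodule.span K {A0v τ q, A1v τ q})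

/-- The conjugate transversal line `g^q` of the regular spread, in `PG(4,q²)`. -/
def gqline {K : Type} [Field K] (τ : K) : Set (PP K 5) :=
  ptsOf (Submodule.span K {B0v τ, B1v τ})

/-- Representative vector of the point `T = δA₀ + A₁` of `g`. -/
def gptVec {K : Type} [Field K] (τ : K) (q : ℕ) : Option K → Fin 5 → K
  | some δ => δ • A0v τ q + A1v τ q
  | none => A0v τ q

/-- Representative vector of the conjugate point `T^q = δ^q A₀^q + A₁^q` of `g^q`. -/
def gqptVec {K : Type} [Field K] (τ : K) (q : ℕ) : Option K → Fin 5 → K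
  | some δ => δ ^ q • B0v τ + B1v τ
  | none => B0v τ

lemma gptVec_ne {K : Type} [Field K] (τ : K) (q : ℕ) (t : Option K) :
    gptVec τ q t ≠ 0 := by
  cases t with
  | none =>
      intro h
      have := congrFun h 1
      simp [gptVec, A0v] at this
  | some δ =>
      intro h
      have := congrFun h 3
      simp [gptVec, A0v, A1v] at this

lemma gqptVec_ne {K : Type} [Field K] (τ : K) (q : ℕ) (t : Option K) :
    gqptVec τ q t ≠ 0 := by
  cases t with
  | none =>
      intro h
      have := congrFun h 1
      simp [gqptVec, B0v] at this
  | some δ =>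
      intro h
      have := congrFun h 3
      simp [gqptVec, B0v, B1v] at this

/-- The point of `g` corresponding to the point of `ℓ∞` with parameter `δ ∈ K ∪ {∞}`. -/
def gpt {K : Type} [Field K] (τ : K) (q : ℕ) (t : Option K) : PP K 5 :=
  Projectivization.mk K (gptVec τ q t) (gptVec_ne τ q t)

/-- The point of `g^q` conjugate to `gpt τ q t`. -/
def gqpt {K : Type} [Field K] (τ : K) (q : ℕ) (t : Option K) : PP K 5 :=
  Projectivization.mk K (gqptVec τ q t) (gqptVec_ne τ q t)

/-- Evaluation of the quadratic form with matrix `M` at `v`. -/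
def qeval {K : Type} [Field K] {n : ℕ} (M : Matrix (Fin n) (Fin n) K) (v : Fin n → K) : K :=
  v ⬝ᵥ M.mulVec v

/-- Vectors of the standard twisted cubic (inside the hyperplane `x₄ = 0`)
with parameters in `S`. -/
def tcVecs {K : Type} [Field K] (S : Set K) : Set (Fin 5 → K) :=
  {v | ∃ θ ∈ S, v = ![1, θ, θ ^ 2, θ ^ 3, 0]} ∪ {![0, 0, 0, 1, 0]}

/-- Vectors of the standard 4-dimensional normal rational curve with parameters in `S`. -/
def nrcVecs {K : Type} [Field K] (S : Set K) : Set (Fin 5 → K) :=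
  {v | ∃ θ ∈ S, v = ![1, θ, θ ^ 2, θ ^ 3, θ ^ 4]} ∪ {![0, 0, 0, 0, 1]}

/-- `R` is a regulus of `Σ∞` in `PG(4,q)`. -/
def IsRegulus {F : Type} [Field F] (q : ℕ) (R : Set (Set (PP F 5))) : Prop :=
  R.ncard = q + 1 ∧
  (∀ ℓ ∈ R, IsFlat 1 ℓ ∧ ℓ ⊆ sinf F) ∧
  (∀ ℓ ∈ R, ∀ ℓ' ∈ R, ℓ ≠ ℓ' → ℓ ∩ ℓ' = ∅) ∧
  (∀ mℓ : Set (PP F 5), IsFlat 1 mℓ → mℓ ⊆ sinf F →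
    (∃ ℓ₁ ∈ R, ∃ ℓ₂ ∈ R, ∃ ℓ₃ ∈ R, ℓ₁ ≠ ℓ₂ ∧ ℓ₁ ≠ ℓ₃ ∧ ℓ₂ ≠ ℓ₃ ∧
      (mℓ ∩ ℓ₁).Nonempty ∧ (mℓ ∩ ℓ₂).Nonempty ∧ (mℓ ∩ ℓ₃).Nonempty) →
    ∀ ℓ ∈ R, (mℓ ∩ ℓ).Nonempty)


/-- The extension `g✶` of the transversal `g` to `PG(4,q⁴)`. -/
def glineL {K L : Type} [Field K] [Field L] (σ : K →+* L) (τ : K) (qq : ℕ) :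
    Set (PP L 5) :=
  ptsOf (Submodule.span L {mapVec σ (A0v τ qq), mapVec σ (A1v τ qq)})

/-- The extension `(g^q)✶` of the transversal `g^q` to `PG(4,q⁴)`. -/
def gqlineL {K L : Type} [Field K] [Field L] (σ : K →+* L) (τ : K) : Set (PP L 5) :=
  ptsOf (Submodule.span L {mapVec σ (B0v τ), mapVec σ (B1v τ)})

/-- The points of `g` (i.e. with parameter in `K ∪ {∞}`), viewed inside `PG(4,q⁴)`. -/
def gKinL {K L : Type} [Field K] [Field L] (σ : K →+* L) (τ : K) (qq : ℕ) :
    Set (PP L 5) :=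
  ⋃ t : Option K, projPt (mapVec σ (gptVec τ qq t))

/-!
A point of `C` is given by a triple `(x, y, z)` of binary quadratic forms over `K`, evaluated at
parameters in `F`. In the coordinates of `PG(4, q²)` adapted to `g` and `g^q`, the image `φ(C)` is
given by the quartic forms `x z̄`, `y z̄`, `x̄ z`, `ȳ z`, `z z̄`, where the bar conjugates
coefficients; this system is stable under conjugation, so it descends to `F`. Its members are
linearly independent as soon as `z` and `z̄` are coprime. A common factor would either give `z` a
root over `F`, that is, a point of `C` on `ℓ∞`, which could only be `T̄`; or make `z` proportional
to a form over `F`, and then `B` would meet `ℓ∞` in a whole Baer subline.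

Over every extension the points of the curve at infinity are the roots of `z z̄`. The roots of `z`
give the points on `g` and the roots of `z̄` those on `g^q`. Since `z` is also the restriction of
the equation of `ℓ∞` to `C⁺`, its roots correspond to the points of `C⁺ ∩ ℓ∞`.
-/

section Points

variable {v w : Fin n → K} {p p' : PP K n}

lemma mem_projPt_iff : p ∈ projPt v ↔ ∃ a : K, p.rep = a • v := by
  constructor
  · rintro ⟨hv, rfl⟩
    obtain ⟨a, ha⟩ := Projectivization.exists_smul_eq_mk_rep K v hv
    exact ⟨a, ha.symm⟩
  · rintro ⟨a, ha⟩
    have hv : v ≠ 0 := fun h => p.rep_nonzero (by rw [ha, h, smul_zero])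
    refine ⟨hv, ?_⟩
    rw [← p.mk_rep, Projectivization.mk_eq_mk_iff']
    exact ⟨a, ha.symm⟩

lemma mk_mem_projPt (hv : v ≠ 0) : Projectivization.mk K v hv ∈ projPt v := ⟨hv, rfl⟩

lemma rep_mem_projPt (p : PP K n) : p ∈ projPt p.rep := ⟨p.rep_nonzero, p.mk_rep.symm⟩

lemma mk_mem_projPt_iff (hv : v ≠ 0) :
    Projectivization.mk K v hv ∈ projPt w ↔ ∃ a : K, a • w = v := by
  constructor
  · rintro ⟨hw, h⟩
    exact (Projectivization.mk_eq_mk_iff' ..).mp h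
  · rintro ⟨a, ha⟩
    have hw : w ≠ 0 := fun h => hv (by rw [← ha, h, smul_zero])
    exact ⟨hw, (Projectivization.mk_eq_mk_iff' ..).mpr ⟨a, ha⟩⟩

lemma eq_of_mem_projPt (hp : p ∈ projPt v) (hp' : p' ∈ projPt v) : p = p' := by
  obtain ⟨-, rfl⟩ := hp
  obtain ⟨-, rfl⟩ := hp'
  rfl

lemma ne_zero_of_mem_projPt (hp : p ∈ projPt v) : v ≠ 0 := hp.choose

lemma projPt_smul {c : K} (hc : c ≠ 0) (v : Fin n → K) : projPt (c • v) = projPt v := by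
  ext p
  simp only [mem_projPt_iff]
  exact ⟨fun ⟨a, ha⟩ => ⟨a * c, by rw [ha, smul_smul]⟩,
    fun ⟨a, ha⟩ => ⟨a / c, by rw [ha, smul_smul, div_mul_cancel₀ a hc]⟩⟩

lemma exists_smul_eq_of_mem_projPt (hv : p ∈ projPt v) (hw : p ∈ projPt w) :
    ∃ a : K, a • w = v := by
  obtain ⟨hv, rfl⟩ := hv
  exact (mk_mem_projPt_iff hv).mp hw

lemma exists_rep_eq_smul (hp : p ∈ projPt v) : ∃ a : K, a ≠ 0 ∧ p.rep = a • v := by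
  obtain ⟨a, ha⟩ := mem_projPt_iff.mp hp
  exact ⟨a, fun h => p.rep_nonzero (by rw [ha, h, zero_smul]), ha⟩

lemma mem_ptsOf_iff (hp : p ∈ projPt v) (W : Submodule K (Fin n → K)) :
    p ∈ ptsOf W ↔ v ∈ W := by
  obtain ⟨a, ha, h⟩ := exists_rep_eq_smul hp
  change p.rep ∈ W ↔ v ∈ W
  rw [h, W.smul_mem_iff ha]

lemma rep_apply_eq_zero_iff (hp : p ∈ projPt v) (i : Fin n) : p.rep i = 0 ↔ v i = 0 := by
  obtain ⟨a, ha, h⟩ := exists_rep_eq_smul hp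
  rw [h, Pi.smul_apply, smul_eq_mul, mul_eq_zero, or_iff_right ha]

lemma mem_linf_iff {v : Fin 3 → K} {p : PP K 3} (hp : p ∈ projPt v) : p ∈ linf K ↔ v 2 = 0 :=
  rep_apply_eq_zero_iff hp 2

lemma mem_sinf_iff {v : Fin 5 → K} {p : PP K 5} (hp : p ∈ projPt v) : p ∈ sinf K ↔ v 4 = 0 :=
  rep_apply_eq_zero_iff hp 4

lemma mulVec_ne_zero {M : Matrix (Fin n) (Fin n) K} (hM : IsUnit M.det) (hv : v ≠ 0) :
    M *ᵥ v ≠ 0 :=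
  fun h => hv (mulVec_inj M hM (h.trans (mulVec_zero M).symm))

lemma isUnit_det_map_iff {E : Type} [Field E] {M : Matrix (Fin n) (Fin n) K} (σ : K →+* E) :
    IsUnit (M.map σ).det ↔ IsUnit M.det := by
  rw [isUnit_iff_ne_zero, isUnit_iff_ne_zero, ← RingHom.mapMatrix_apply, ← RingHom.map_det,
    map_ne_zero]

end Points

section AlgVec

variable {F : Type} [Field F] [Algebra F K]

lemma algVec_injective : Function.Injective (algVec F : (Fin n → F) → Fin n → K) :=
  (algebraMap F K).injective.comp_left

lemma algVec_smul (c : F) (v : Fin n → F) :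
    algVec F (K := K) (c • v) = algebraMap F K c • algVec F v :=
  funext fun i => map_mul (algebraMap F K) c (v i)

lemma algVec_zero : algVec F (K := K) (0 : Fin n → F) = 0 :=
  funext fun _ => map_zero (algebraMap F K)

lemma algVec_one : algVec F (K := K) (1 : Fin n → F) = 1 :=
  funext fun _ => map_one (algebraMap F K)

lemma algVec_single_one (j : Fin n) : algVec F (K := K) (Pi.single j 1) = Pi.single j 1 := by
  ext i
  simp [algVec, Pi.single_apply, apply_ite (algebraMap F K)]

lemma algVec_ne_zero {v : Fin n → F} (hv : v ≠ 0) : algVec F (K := K) v ≠ 0 :=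
  fun h => hv (algVec_injective (h.trans algVec_zero.symm))

lemma algVec_dotProduct_algVec (v w : Fin n → F) :
    algVec F v ⬝ᵥ algVec F w = algebraMap F K (v ⬝ᵥ w) :=
  (RingHom.map_dotProduct (algebraMap F K) v w).symm

lemma map_mulVec_algVec (M : Matrix (Fin m) (Fin n) F) (v : Fin n → F) :
    M.map (algebraMap F K) *ᵥ algVec F v = algVec F (M *ᵥ v) :=
  funext fun i => (RingHom.map_mulVec (algebraMap F K) M v i).symm

end AlgVec

section Veronese

/-- The degree-`n` Veronese map, sending homogeneous parameters `(s, t)` of a projective line to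
`(sⁿ, sⁿ⁻¹t, …, tⁿ)`. It parametrises the conic (`n = 2`) and the normal rational curve
(`n = 4`) including their points with parameter `∞`. -/
def veronese (n : ℕ) (w : Fin 2 → K) : Fin (n + 1) → K :=
  fun i => w 0 ^ (i.rev : ℕ) * w 1 ^ (i : ℕ)

lemma veronese_smul (c : K) (w : Fin 2 → K) : veronese n (c • w) = c ^ n • veronese n w := by
  ext i
  have hi : c ^ n = c ^ (i.rev : ℕ) * c ^ (i : ℕ) := by rw [← pow_add, Fin.val_rev]; congr; omega
  simp only [veronese, Pi.smul_apply, smul_eq_mul, mul_pow, hi]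
  ring

lemma veronese_two (w : Fin 2 → K) : veronese 2 w = ![w 0 ^ 2, w 0 * w 1, w 1 ^ 2] := by
  ext i; fin_cases i <;> simp [veronese, Fin.rev]

lemma veronese_four (w : Fin 2 → K) :
    veronese 4 w = ![w 0 ^ 4, w 0 ^ 3 * w 1, w 0 ^ 2 * w 1 ^ 2, w 0 * w 1 ^ 3, w 1 ^ 4] := by
  ext i; fin_cases i <;> simp [veronese, Fin.rev]

lemma veronese_ne_zero {w : Fin 2 → K} (hw : w ≠ 0) : veronese n w ≠ 0 := by
  contrapose! hw
  ext i
  fin_cases i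
  · have h := congrFun hw 0
    simp only [veronese, Fin.rev_zero, Fin.val_last, Fin.val_zero, pow_zero, mul_one] at h
    exact eq_zero_of_pow_eq_zero h
  · have h := congrFun hw (Fin.last n)
    simp only [veronese, Fin.rev_last, Fin.val_last, Fin.val_zero, pow_zero, one_mul] at h
    exact eq_zero_of_pow_eq_zero h

lemma algVec_veronese {F : Type} [Field F] [Algebra F K] (w : Fin 2 → F) :
    algVec F (K := K) (veronese n w) = veronese n (algVec F w) := by
  ext i
  simp [algVec, veronese]

lemma exists_smul_eq_of_ne_zero {w : Fin 2 → K} (hw : w ≠ 0) :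
    ∃ c : K, c ≠ 0 ∧ ((∃ θ, w = c • ![1, θ]) ∨ w = c • ![0, 1]) := by
  by_cases h0 : w 0 = 0
  · refine ⟨w 1, fun h1 => hw ?_, .inr ?_⟩ <;> ext i <;> fin_cases i <;> simp [*]
  · refine ⟨w 0, h0, .inl ⟨w 1 / w 0, ?_⟩⟩
    ext i; fin_cases i <;> simp [mul_div_cancel₀, h0]

lemma mem_mimg_conicVecs_iff (F : Type) [Field F] [Algebra F K] {M : Matrix (Fin m) (Fin 3) K}
    {p : PP K m} :
    p ∈ mimg M (conicVecs (Set.range (algebraMap F K))) ↔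
      ∃ w : Fin 2 → F, w ≠ 0 ∧ p ∈ projPt (M *ᵥ veronese 2 (algVec F w)) := by
  constructor
  · rintro ⟨v, ⟨_, ⟨θ, rfl⟩, rfl⟩ | rfl, hp⟩
    · exact ⟨![1, θ], by simp, by simpa [veronese_two, algVec] using hp⟩
    · exact ⟨![0, 1], by simp, by simpa [veronese_two, algVec] using hp⟩
  · rintro ⟨w, hw, hp⟩
    obtain ⟨c, hc, hw⟩ := exists_smul_eq_of_ne_zero hw
    have hc' : algebraMap F K c ^ 2 ≠ 0 := pow_ne_zero _ ((map_ne_zero _).mpr hc)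
    rcases hw with ⟨θ, rfl⟩ | rfl <;>
      rw [algVec_smul, veronese_smul, mulVec_smul, projPt_smul hc', veronese_two] at hp
    · exact ⟨_, .inl ⟨_, ⟨θ, rfl⟩, rfl⟩, by simpa [algVec] using hp⟩
    · exact ⟨_, .inr rfl, by simpa [algVec] using hp⟩

lemma mem_mimg_conicVecs_univ_iff {M : Matrix (Fin m) (Fin 3) K} {p : PP K m} :
    p ∈ mimg M (conicVecs Set.univ) ↔
      ∃ w : Fin 2 → K, w ≠ 0 ∧ p ∈ projPt (M *ᵥ veronese 2 w) := by
  have h := mem_mimg_conicVecs_iff K (M := M) (p := p)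
  rwa [Algebra.algebraMap_self, RingHom.coe_id, Set.range_id] at h

lemma mem_mimg_nrcVecs_univ_iff {M : Matrix (Fin m) (Fin 5) K} {p : PP K m} :
    p ∈ mimg M (nrcVecs Set.univ) ↔
      ∃ w : Fin 2 → K, w ≠ 0 ∧ p ∈ projPt (M *ᵥ veronese 4 w) := by
  constructor
  · rintro ⟨v, ⟨θ, -, rfl⟩ | rfl, hp⟩
    · exact ⟨![1, θ], by simp, by simpa [veronese_four] using hp⟩
    · exact ⟨![0, 1], by simp, by simpa [veronese_four] using hp⟩
  · rintro ⟨w, hw, hp⟩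
    obtain ⟨c, hc, hw⟩ := exists_smul_eq_of_ne_zero hw
    rcases hw with ⟨θ, rfl⟩ | rfl <;>
      rw [veronese_smul, mulVec_smul, projPt_smul (pow_ne_zero _ hc), veronese_four] at hp
    · exact ⟨_, .inl ⟨θ, trivial, rfl⟩, by simpa using hp⟩
    · exact ⟨_, .inr rfl, by simpa using hp⟩

end Veronese

section BinaryForms

open Polynomial

lemma eval_ofFn (a : Fin (n + 1) → K) (θ : K) :
    (ofFn (n + 1) a).eval θ = a ⬝ᵥ veronese n ![1, θ] := by
  simp [ofFn_eq_sum_monomial, eval_finsetSum, dotProduct, veronese]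

lemma map_ofFn {E : Type} [Field E] (σ : K →+* E) (a : Fin n → K) :
    (ofFn n a).map σ = ofFn n (σ ∘ a) := by
  simp [ofFn_eq_sum_monomial, Polynomial.map_sum]

lemma eq_zero_of_dotProduct_veronese_eq_zero {F : Type} [Field F] [Fintype F] [Algebra F K]
    (hn : n ≤ Fintype.card F) {a : Fin (n + 1) → K}
    (ha : ∀ w : Fin 2 → F, w ≠ 0 → a ⬝ᵥ veronese n (algVec F w) = 0) : a = 0 := by
  have h_lead : (ofFn (n + 1) a).coeff n = 0 := by
    rw [ofFn_coeff_eq_val_of_lt a n.lt_succ_self]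
    have h := ha ![0, 1] (by simp)
    rw [dotProduct, Finset.sum_eq_single (Fin.last n)] at h
    · change a (Fin.last n) = 0
      simpa [veronese, algVec] using h
    · intro i _ hi
      have : n - i ≠ 0 := Nat.sub_ne_zero_of_lt (Fin.val_lt_last hi)
      simp [veronese, algVec, this]
    · simp
  have h_deg : (ofFn (n + 1) a).natDegree ≤ n := Nat.lt_succ_iff.mp (ofFn_natDegree_lt (by omega) a)
  refine injective_ofFn (n + 1) ((?_ : ofFn (n + 1) a = 0).trans (map_zero _).symm)
  rcases h_deg.eq_or_lt with h | h
  · rwa [← leadingCoeff_eq_zero, leadingCoeff, h]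
  · refine eq_zero_of_natDegree_lt_card_of_eval_eq_zero _ (algebraMap F K).injective
      (fun θ => ?_) (h.trans_le hn)
    rw [eval_ofFn, ← ha ![1, θ] (by simp)]
    congr
    ext i; fin_cases i <;> simp [algVec]

end BinaryForms

section Conics

lemma qeval_mulVec (A X : Matrix (Fin n) (Fin n) K) (v : Fin n → K) :
    qeval A (X *ᵥ v) = qeval (Xᵀ * A * X) v := by
  rw [qeval, qeval, dotProduct_mulVec, vecMul_mulVec, ← dotProduct_mulVec, mulVec_mulVec]

/-- The matrix of the quadratic form `v₁² - v₀v₂` cutting out the standard conic. -/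
def conicMatrix (K : Type) [Field K] : Matrix (Fin 3) (Fin 3) K := !![0, 0, -1; 0, 1, 0; 0, 0, 0]

lemma qeval_conicMatrix (v : Fin 3 → K) : qeval (conicMatrix K) v = v 1 ^ 2 - v 0 * v 2 := by
  simp only [qeval, conicMatrix, dotProduct, mulVec, Fin.sum_univ_three, of_apply, cons_val',
    cons_val]
  ring

lemma exists_smul_veronese_two_eq {v : Fin 3 → K} (hv : v ≠ 0) (h : v 1 ^ 2 = v 0 * v 2) :
    ∃ w : Fin 2 → K, ∃ a : K, a • v = veronese 2 w ∧ w ≠ 0 := by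
  by_cases h0 : v 0 = 0
  · have h1 : v 1 = 0 := by simpa [h0] using h
    have h2 : v 2 ≠ 0 := fun h2 => hv (by ext i; fin_cases i <;> assumption)
    refine ⟨![0, v 2], v 2, ?_, by simp [h2]⟩
    ext i; fin_cases i <;> simp [veronese_two, h0, h1, pow_two]
  · refine ⟨![v 0, v 1], v 0, ?_, by simp [h0]⟩
    ext i; fin_cases i <;> simp [veronese_two, h, pow_two]

lemma mem_mimg_conicVecs_univ_iff_qeval {M : Matrix (Fin 3) (Fin 3) K} (hM : IsUnit M.det)
    {v : Fin 3 → K} {p : PP K 3} (hp : p ∈ projPt v) :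
    p ∈ mimg M (conicVecs Set.univ) ↔ qeval (conicMatrix K) (M⁻¹ *ᵥ v) = 0 := by
  rw [mem_mimg_conicVecs_univ_iff, qeval_conicMatrix, sub_eq_zero]
  constructor
  · rintro ⟨w, -, hw⟩
    obtain ⟨a, rfl⟩ := exists_smul_eq_of_mem_projPt hp hw
    rw [mulVec_smul, mulVec_mulVec, nonsing_inv_mul M hM, one_mulVec, veronese_two]
    simp only [Pi.smul_apply, smul_eq_mul, cons_val]
    ring
  · intro h
    have hv : M⁻¹ *ᵥ v ≠ 0 :=
      mulVec_ne_zero (isUnit_nonsing_inv_det M hM) (ne_zero_of_mem_projPt hp)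
    obtain ⟨w, a, hw, hw0⟩ := exists_smul_veronese_two_eq hv h
    have hMv : M *ᵥ veronese 2 w = a • v := by
      rw [← hw, mulVec_smul, mulVec_mulVec, mul_nonsing_inv M hM, one_mulVec]
    have ha : a ≠ 0 := by
      rintro rfl
      exact veronese_ne_zero hw0 (by rw [← hw, zero_smul])
    exact ⟨w, hw0, by rwa [hMv, projPt_smul ha]⟩

lemma qeval_eq_mul_of_forall_veronese {F : Type} [Field F] [Fintype F] [Algebra F K]
    (hF : 4 ≤ Fintype.card F) {A : Matrix (Fin 3) (Fin 3) K}
    (hA : ∀ w : Fin 2 → F, w ≠ 0 → qeval A (veronese 2 (algVec F w)) = 0) (v : Fin 3 → K) :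
    qeval A v = A 1 1 * qeval (conicMatrix K) v := by
  have h_coeffs : ![A 0 0, A 0 1 + A 1 0, A 0 2 + A 1 1 + A 2 0, A 1 2 + A 2 1, A 2 2] = 0 := by
    refine eq_zero_of_dotProduct_veronese_eq_zero (n := 4) hF fun w hw => ?_
    rw [← hA w hw, veronese_two, veronese_four]
    simp only [qeval, dotProduct, mulVec, Nat.reduceAdd, Fin.sum_univ_three, Fin.sum_univ_five,
      cons_val]
    ring
  have h0 : A 0 0 = 0 := congrFun h_coeffs 0
  have h1 : A 0 1 + A 1 0 = 0 := congrFun h_coeffs 1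
  have h2 : A 0 2 + A 1 1 + A 2 0 = 0 := congrFun h_coeffs 2
  have h3 : A 1 2 + A 2 1 = 0 := congrFun h_coeffs 3
  have h4 : A 2 2 = 0 := congrFun h_coeffs 4
  rw [qeval_conicMatrix]
  simp only [qeval, dotProduct, mulVec, Fin.sum_univ_three]
  linear_combination v 0 ^ 2 * h0 + v 0 * v 1 * h1 + v 0 * v 2 * h2 + v 1 * v 2 * h3 + v 2 ^ 2 * h4

theorem mimg_conicVecs_univ_eq_of_subset {F : Type} [Field F] [Fintype F] [Algebra F K]
    (hF : 4 ≤ Fintype.card F) {M P : Matrix (Fin 3) (Fin 3) K} (hM : IsUnit M.det)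
    (hP : IsUnit P.det)
    (hMP : mimg M (conicVecs (Set.range (algebraMap F K))) ⊆ mimg P (conicVecs Set.univ)) :
    mimg P (conicVecs Set.univ) = mimg M (conicVecs Set.univ) := by
  set X := P⁻¹ * M
  have hX : IsUnit X.det := by
    rw [det_mul]
    exact (isUnit_nonsing_inv_det P hP).mul hM
  obtain ⟨c, hc⟩ : ∃ c : K, ∀ v,
      qeval (conicMatrix K) (X *ᵥ v) = c * qeval (conicMatrix K) v := by
    simp only [qeval_mulVec]
    refine ⟨_, qeval_eq_mul_of_forall_veronese hF fun w hw => ?_⟩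
    rw [← qeval_mulVec, ← mulVec_mulVec]
    have hv := mulVec_ne_zero hM (veronese_ne_zero (n := 2) (algVec_ne_zero hw))
    rw [← mem_mimg_conicVecs_univ_iff_qeval hP (mk_mem_projPt hv)]
    exact hMP ((mem_mimg_conicVecs_iff F).mpr ⟨w, hw, mk_mem_projPt hv⟩)
  have hc0 : c ≠ 0 := by
    rintro rfl
    have h := hc (X⁻¹ *ᵥ ![0, 1, 0])
    rw [mulVec_mulVec, mul_nonsing_inv X hX, one_mulVec, qeval_conicMatrix] at h
    simp at h
  ext p
  have hp := rep_mem_projPt p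
  have hXM : P⁻¹ *ᵥ p.rep = X *ᵥ (M⁻¹ *ᵥ p.rep) := by
    rw [mulVec_mulVec, mul_nonsing_inv_cancel_right _ _ hM]
  rw [mem_mimg_conicVecs_univ_iff_qeval hP hp, mem_mimg_conicVecs_univ_iff_qeval hM hp, hXM, hc,
    mul_eq_zero, or_iff_right hc0]

end Conics

section BaerSubplanes

variable {F : Type} [Field F] [Algebra F K]

lemma exists_smul_map_of_frame {P : Matrix (Fin n) (Fin n) K} (hP : IsUnit P.det)
    (h_col : ∀ j, ∃ (c : K) (f : Fin n → F), P.col j = c • algVec F f)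
    (h_sum : ∃ (c : K) (f : Fin n → F), P *ᵥ 1 = c • algVec F f) :
    ∃ (ρ : K) (Q : Matrix (Fin n) (Fin n) F), P = ρ • Q.map (algebraMap F K) := by
  choose c f hf using h_col
  obtain ⟨ρ, e, he⟩ := h_sum
  set A : Matrix (Fin n) (Fin n) F := Matrix.of fun i j => f j i
  have hPA : P = A.map (algebraMap F K) * diagonal c := by
    ext i j
    rw [mul_diagonal]
    exact (congrFun (hf j) i).trans (mul_comm _ _)
  have hA : IsUnit A.det := by
    rw [hPA, det_mul] at hP
    exact (isUnit_det_map_iff (algebraMap F K)).mp (isUnit_of_mul_isUnit_left hP)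
  have hc : c = ρ • algVec F (A⁻¹ *ᵥ e) := by
    apply mulVec_inj _ ((isUnit_det_map_iff (algebraMap F K)).mpr hA)
    rw [mulVec_smul, map_mulVec_algVec, mulVec_mulVec, mul_nonsing_inv A hA, one_mulVec, ← he, hPA,
      ← mulVec_mulVec]
    congr
    ext i
    simp [mulVec_diagonal]
  refine ⟨ρ, A * diagonal (A⁻¹ *ᵥ e), ?_⟩
  rw [hPA, hc, Matrix.map_mul, diagonal_map (map_zero _), diagonal_smul, Matrix.mul_smul]
  rfl

lemma exists_smul_map_of_veronese_two [Fintype F] (hF : 3 ≤ Fintype.card F)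
    {X : Matrix (Fin 3) (Fin 3) K} (hX : IsUnit X.det)
    (h : ∀ w : Fin 2 → F, w ≠ 0 →
      ∃ (c : K) (f : Fin 3 → F), X *ᵥ algVec F (veronese 2 w) = c • algVec F f) :
    ∃ (ρ : K) (Q : Matrix (Fin 3) (Fin 3) F), X = ρ • Q.map (algebraMap F K) := by
  obtain ⟨θ, -, hθ⟩ := Finset.exists_mem_notMem_of_card_lt_card
    ((Finset.card_le_two (a := (0 : F)) (b := 1)).trans_lt hF)
  obtain ⟨hθ0, hθ1⟩ : θ ≠ 0 ∧ θ ≠ 1 := by simpa using hθ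
  -- The columns of `G` represent the points with parameters `0`, `1`, `∞` of the conic, scaled so
  -- that their sum represents the point with parameter `θ`.
  set G : Matrix (Fin 3) (Fin 3) F := !![1 - θ, θ, 0; 0, θ, 0; 0, θ, θ ^ 2 - θ]
  have hG : IsUnit G.det := by
    have h_det : G.det = θ ^ 2 * (1 - θ) * (θ - 1) := by
      simp only [G, det_fin_three, of_apply, cons_val', cons_val]
      ring
    rw [isUnit_iff_ne_zero, h_det]
    exact mul_ne_zero (mul_ne_zero (pow_ne_zero 2 hθ0) (sub_ne_zero.mpr hθ1.symm))
      (sub_ne_zero.mpr hθ1)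
  have h_smul (a : F) {w : Fin 2 → F} (hw : w ≠ 0) {v : Fin 3 → F}
      (hv : G *ᵥ v = a • veronese 2 w) :
      ∃ (c : K) (f : Fin 3 → F),
        (X * G.map (algebraMap F K)) *ᵥ algVec F v = c • algVec F f := by
    obtain ⟨c, f, hf⟩ := h w hw
    refine ⟨algebraMap F K a * c, f, ?_⟩
    rw [← mulVec_mulVec, map_mulVec_algVec, hv, algVec_smul, mulVec_smul, hf, smul_smul]
  have h_col (j : Fin 3) : ∃ (c : K) (f : Fin 3 → F),
      (X * G.map (algebraMap F K)).col j = c • algVec F f := by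
    rw [← mulVec_single_one, ← algVec_single_one (F := F)]
    fin_cases j
    · refine h_smul (1 - θ) (w := ![1, 0]) (by simp) ?_
      ext i; fin_cases i <;> simp [G, veronese_two]
    · refine h_smul θ (w := ![1, 1]) (by simp) ?_
      ext i; fin_cases i <;> simp [G, veronese_two]
    · refine h_smul (θ ^ 2 - θ) (w := ![0, 1]) (by simp) ?_
      ext i; fin_cases i <;> simp [G, veronese_two]
  have h_sum : ∃ (c : K) (f : Fin 3 → F),
      (X * G.map (algebraMap F K)) *ᵥ 1 = c • algVec F f := by
    rw [← algVec_one (F := F)]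
    refine h_smul 1 (w := ![1, θ]) (by simp) ?_
    ext i; fin_cases i <;> simp [G, veronese_two, mulVec, dotProduct, Fin.sum_univ_three]
  have hG_map := (isUnit_det_map_iff (algebraMap F K)).mpr hG
  obtain ⟨ρ, Q, hQ⟩ :=
    exists_smul_map_of_frame (by rw [det_mul]; exact hX.mul hG_map) h_col h_sum
  refine ⟨ρ, Q * G⁻¹, ?_⟩
  rw [Matrix.map_mul, ← Matrix.smul_mul, ← hQ, Matrix.mul_assoc, ← Matrix.map_mul,
    mul_nonsing_inv G hG, Matrix.map_one _ (map_zero _) (map_one _), Matrix.mul_one]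

theorem mimg_subplaneVecs_subset_of_mimg_conicVecs_subset [Fintype F] (hF : 3 ≤ Fintype.card F)
    {M N : Matrix (Fin 3) (Fin 3) K} (hM : IsUnit M.det) (hN : IsUnit N.det)
    (hMN : mimg M (conicVecs (Set.range (algebraMap F K))) ⊆ mimg N (subplaneVecs F K)) :
    mimg M (subplaneVecs F K) ⊆ mimg N (subplaneVecs F K) := by
  have hX : IsUnit (N⁻¹ * M).det := by
    rw [det_mul]
    exact (isUnit_nonsing_inv_det N hN).mul hM
  obtain ⟨ρ, Q, hQ⟩ := exists_smul_map_of_veronese_two (F := F) hF hX fun w hw => by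
    rw [algVec_veronese]
    have hv := mulVec_ne_zero hM (veronese_ne_zero (n := 2) (algVec_ne_zero hw))
    obtain ⟨_, ⟨f, -, rfl⟩, hf⟩ := hMN ((mem_mimg_conicVecs_iff F).mpr ⟨w, hw, mk_mem_projPt hv⟩)
    obtain ⟨a, ha⟩ := (mk_mem_projPt_iff hv).mp hf
    refine ⟨a, f, ?_⟩
    rw [← mulVec_mulVec, ← ha, mulVec_smul, mulVec_mulVec, nonsing_inv_mul N hN, one_mulVec]
  rintro p ⟨_, ⟨f, -, rfl⟩, hp⟩
  have hMf : M *ᵥ algVec F f = ρ • N *ᵥ algVec F (Q *ᵥ f) := by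
    rw [← map_mulVec_algVec, ← mulVec_smul, ← smul_mulVec, ← hQ, mulVec_mulVec,
      mul_nonsing_inv_cancel_left _ _ hN]
  have hρ : ρ ≠ 0 := by
    rintro rfl
    exact ne_zero_of_mem_projPt hp (by rw [hMf, zero_smul])
  rw [hMf, projPt_smul hρ] at hp
  refine ⟨_, ⟨Q *ᵥ f, fun h => ne_zero_of_mem_projPt hp ?_, rfl⟩, hp⟩
  rw [h, algVec_zero, mulVec_zero]

lemma row_two_ne_smul_algVec {M : Matrix (Fin 3) (Fin 3) K} (hM : IsUnit M.det)
    (h0 : M 2 0 ≠ 0) (hlinf : (mimg M (subplaneVecs F K) ∩ linf K).Subsingleton)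
    (c : K) (f : Fin 3 → F) : M 2 ≠ c • algVec F f := by
  intro h
  have hf0 : f 0 ≠ 0 := fun hf0 => h0 (by simp [h, algVec, hf0])
  have h_mem {u : Fin 3 → F} (hu0 : u ≠ 0) (hu : f ⬝ᵥ u = 0) :
      Projectivization.mk K (M *ᵥ algVec F u) (mulVec_ne_zero hM (algVec_ne_zero hu0)) ∈
        mimg M (subplaneVecs F K) ∩ linf K := by
    refine ⟨⟨_, ⟨u, hu0, rfl⟩, mk_mem_projPt _⟩, (mem_linf_iff (mk_mem_projPt _)).mpr ?_⟩
    rw [mulVec, h, smul_dotProduct, algVec_dotProduct_algVec, hu, map_zero, smul_zero]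
  have h_dot₁ : f ⬝ᵥ ![f 1, -f 0, 0] = 0 := by simp [dotProduct, Fin.sum_univ_three, mul_comm]
  have h_dot₂ : f ⬝ᵥ ![f 2, 0, -f 0] = 0 := by simp [dotProduct, Fin.sum_univ_three, mul_comm]
  have h_eq := hlinf (h_mem (by simp [hf0]) h_dot₁) (h_mem (by simp [hf0]) h_dot₂)
  obtain ⟨a, ha⟩ := (Projectivization.mk_eq_mk_iff' ..).mp h_eq
  rw [← mulVec_smul] at ha
  have h1 := congrFun (mulVec_inj M hM ha) 1
  simp [algVec, hf0] at h1

end BaerSubplanes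

section ConjugateQuadratics

open Polynomial

variable {F : Type} [Field F] [Algebra F K] {conj : K →ₐ[F] K}

lemma exists_monic_map_dvd_of_not_isCoprime_map (h_inv : Function.Involutive conj)
    (h_fix : ∀ x, conj x = x → x ∈ Set.range (algebraMap F K)) {z : K[X]} (hz : z ≠ 0)
    (h : ¬IsCoprime z (z.map conj.toRingHom)) :
    ∃ d : F[X], d.Monic ∧ d.natDegree ≠ 0 ∧ d.map (algebraMap F K) ∣ z := by
  set z' := z.map conj.toRingHom
  have hz' : z'.map conj.toRingHom = z := by
    rw [Polynomial.map_map]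
    convert Polynomial.map_id
    exact RingHom.ext h_inv
  set g := EuclideanDomain.gcd z z'
  have hg : g ≠ 0 := fun h0 => hz (EuclideanDomain.gcd_eq_zero_iff.mp h0).1
  have h_assoc : Associated (g.map conj.toRingHom) g := by
    rw [← Polynomial.gcd_map, hz']
    exact associated_of_dvd_dvd
      (EuclideanDomain.dvd_gcd (EuclideanDomain.gcd_dvd_right ..) (EuclideanDomain.gcd_dvd_left ..))
      (EuclideanDomain.dvd_gcd (EuclideanDomain.gcd_dvd_right ..) (EuclideanDomain.gcd_dvd_left ..))
  have h_monic : (normalize g).Monic := monic_normalize hg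
  have h_norm : Associated (normalize g) g := normalize_associated g
  have h_map : (normalize g).map conj.toRingHom = normalize g :=
    eq_of_monic_of_associated (h_monic.map _) h_monic
      (((h_norm.map (mapRingHom conj.toRingHom)).trans h_assoc).trans h_norm.symm)
  have h_lifts : normalize g ∈ lifts (algebraMap F K) :=
    (lifts_iff_coeff_lifts _).mpr fun n => h_fix _ (by
      conv_rhs => rw [← h_map, coeff_map]
      rfl)
  obtain ⟨d, hd, hd_deg, hd_monic⟩ := lifts_and_natDegree_eq_and_monic h_lifts h_monic
  refine ⟨d, hd_monic, fun h_deg => h ?_, ?_⟩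
  · rw [← EuclideanDomain.gcd_isUnit_iff, ← h_norm.isUnit_iff,
      h_monic.natDegree_eq_zero.mp (hd_deg ▸ h_deg)]
    exact isUnit_one
  · rw [hd, h_norm.dvd_iff_dvd_left]
    exact EuclideanDomain.gcd_dvd_left ..

lemma isCoprime_map_of_natDegree_eq_two (h_inv : Function.Involutive conj)
    (h_fix : ∀ x, conj x = x → x ∈ Set.range (algebraMap F K)) {z : K[X]} (h_deg : z.natDegree = 2)
    (h_root : ∀ x : F, z.eval (algebraMap F K x) ≠ 0)
    (h_map : ∀ (c : K) (d : F[X]), z ≠ C c * d.map (algebraMap F K)) :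
    IsCoprime z (z.map conj.toRingHom) := by
  have hz : z ≠ 0 := by
    rintro rfl
    simp at h_deg
  by_contra h
  obtain ⟨d, hd, hd0, hdz⟩ := exists_monic_map_dvd_of_not_isCoprime_map h_inv h_fix hz h
  have h_le : d.natDegree ≤ 2 := by
    rw [← h_deg, ← natDegree_map (algebraMap F K)]
    exact natDegree_le_of_dvd hdz hz
  obtain h1 | h2 : d.natDegree = 1 ∨ d.natDegree = 2 := by omega
  · obtain ⟨x, hx⟩ :=
      exists_root_of_degree_eq_one ((degree_eq_iff_natDegree_eq_of_pos one_pos).mpr h1)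
    exact h_root x (eval_eq_zero_of_dvd_of_eval_eq_zero hdz (by rw [eval_map_apply, hx, map_zero]))
  · refine h_map z.leadingCoeff d
      (eq_leadingCoeff_mul_of_monic_of_dvd_of_natDegree_le (hd.map _) hdz ?_)
    rw [natDegree_map, h2, h_deg]

end ConjugateQuadratics

section FiniteFields

open Polynomial

lemma mem_range_algebraMap_of_pow_card_eq {F : Type} [Field F] [Fintype F] [Finite K] [Algebra F K]
    {x : K} (hx : x ^ Fintype.card F = x) : x ∈ Set.range (algebraMap F K) := by
  obtain ⟨p, hp⟩ := CharP.exists F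
  have : Fact p.Prime := ⟨CharP.char_is_prime F p⟩
  refine (IsGalois.mem_range_algebraMap_iff_fixed x).mpr fun g => ?_
  obtain ⟨i, hi⟩ := FiniteField.exists_forall_apply_eq_pow F p K g
  rw [hi, Nat.card_eq_fintype_card, ← congrFun (pow_iterate _ i) x]
  exact Function.iterate_fixed hx i

lemma frobeniusAlgHom_involutive {F : Type} [Field F] [Fintype F] [Fintype K] [Algebra F K]
    (hK : Fintype.card K = Fintype.card F ^ 2) :
    Function.Involutive (FiniteField.frobeniusAlgHom F K) := by
  intro x
  simp only [FiniteField.coe_frobeniusAlgHom]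
  rw [← pow_mul, ← sq, ← hK, FiniteField.pow_card]

lemma finrank_eq_two_of_card_eq_sq {L : Type} [Field L] [Fintype K] [Fintype L] [Algebra K L]
    (hL : Fintype.card L = Fintype.card K ^ 2) : Module.finrank K L = 2 := by
  rw [Module.card_eq_pow_finrank (K := K)] at hL
  exact Nat.pow_right_injective Fintype.one_lt_card hL

lemma card_rootSet_eq_natDegree_of_dvd_finrank {L : Type} [Field L] [Finite K] [Finite L]
    [Algebra K L] {f : K[X]} (hf : Irreducible f) (h : f.natDegree ∣ Module.finrank K L) :
    Fintype.card (f.rootSet L) = f.natDegree := by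
  refine card_rootSet_eq_natDegree (PerfectField.separable_of_irreducible hf) ?_
  have h_dvd := hf.natDegree_dvd_iff_dvd_X_pow_card_pow_sub_X.mp h
  rw [← Module.natCard_eq_pow_finrank] at h_dvd
  have h_map : (X ^ Nat.card L - X : K[X]).map (algebraMap K L) = X ^ Nat.card L - X := by simp
  refine Splits.of_dvd (h_map ▸ splits_X_pow_nat_card_sub_X) ?_ (map_dvd (algebraMap K L) h_dvd)
  rw [h_map]
  exact FiniteField.X_pow_card_sub_X_ne_zero L Finite.one_lt_card

end FiniteFields

section TransversalCoordinates

open Polynomial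

/-- The coefficients of the product of two binary quadratic forms given by their coefficients. -/
def mulCoeffs (a b : Fin 3 → K) : Fin 5 → K :=
  ![a 0 * b 0, a 0 * b 1 + a 1 * b 0, a 0 * b 2 + a 1 * b 1 + a 2 * b 0, a 1 * b 2 + a 2 * b 1,
    a 2 * b 2]

lemma mulCoeffs_comm (a b : Fin 3 → K) : mulCoeffs a b = mulCoeffs b a := by
  simp only [mulCoeffs]
  ring_nf

lemma comp_mulCoeffs {E : Type} [Field E] (σ : K →+* E) (a b : Fin 3 → K) :
    σ ∘ mulCoeffs a b = mulCoeffs (σ ∘ a) (σ ∘ b) := by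
  ext i
  fin_cases i <;> simp [mulCoeffs]

lemma mulCoeffs_dotProduct_veronese (a b : Fin 3 → K) (w : Fin 2 → K) :
    mulCoeffs a b ⬝ᵥ veronese 4 w = (a ⬝ᵥ veronese 2 w) * (b ⬝ᵥ veronese 2 w) := by
  simp only [veronese_four, veronese_two, dotProduct, Fin.sum_univ_three, Fin.sum_univ_five,
    mulCoeffs, cons_val]
  ring

lemma ofFn_mulCoeffs (a b : Fin 3 → K) : ofFn 5 (mulCoeffs a b) = ofFn 3 a * ofFn 3 b := by
  simp only [ofFn_eq_sum_monomial, Fin.sum_univ_three, Fin.sum_univ_five, mulCoeffs, cons_val,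
    ← C_mul_X_pow_eq_monomial, map_add, map_mul, Fin.coe_ofNat_eq_mod, Nat.reduceMod]
  ring

/-- The change of coordinates of `PG(4)` taking `(x₀, x₁, y₀, y₁, z)` to
`(x₀ + t x₁, y₀ + t y₁, x₀ + t' x₁, y₀ + t' y₁, z)`. For `t = τ` and `t' = τ^q` the line `g` becomes
the locus of the points whose last three coordinates vanish. -/
def transversalMatrix (t t' : K) : Matrix (Fin 5) (Fin 5) K :=
  !![1, t, 0, 0, 0; 0, 0, 1, t, 0; 1, t', 0, 0, 0; 0, 0, 1, t', 0; 0, 0, 0, 0, 1]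

lemma transversalMatrix_mulVec (t t' : K) (v : Fin 5 → K) :
    transversalMatrix t t' *ᵥ v =
      ![v 0 + t * v 1, v 2 + t * v 3, v 0 + t' * v 1, v 2 + t' * v 3, v 4] := by
  ext i
  fin_cases i <;> simp [transversalMatrix, mulVec, dotProduct, Fin.sum_univ_succ]

lemma isUnit_det_transversalMatrix {t t' : K} (h : t ≠ t') :
    IsUnit (transversalMatrix t t').det := by
  rw [isUnit_iff_ne_zero, ne_eq, ← exists_mulVec_eq_zero_iff]
  rintro ⟨v, hv0, hv⟩
  rw [transversalMatrix_mulVec] at hv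
  have h0 : v 0 + t * v 1 = 0 := congrFun hv 0
  have h1 : v 2 + t * v 3 = 0 := congrFun hv 1
  have h2 : v 0 + t' * v 1 = 0 := congrFun hv 2
  have h3 : v 2 + t' * v 3 = 0 := congrFun hv 3
  have h4 : v 4 = 0 := congrFun hv 4
  have h_sub : t - t' ≠ 0 := sub_ne_zero.mpr h
  have hv1 : v 1 = 0 := (mul_eq_zero_iff_left h_sub).mp (by linear_combination h0 - h2)
  have hv3 : v 3 = 0 := (mul_eq_zero_iff_left h_sub).mp (by linear_combination h1 - h3)
  refine hv0 (funext fun i => ?_)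
  fin_cases i <;> simp_all

/-- The homogeneous transversal coordinates `(x z', y z', x' z, y' z, z z')` of the point
corresponding to `c = (x, y, z)`, where `d = (x', y', z')` is the conjugate of `c`. -/
def bruckBoseVec (c d : Fin 3 → K) : Fin 5 → K :=
  ![c 0 * d 2, c 1 * d 2, d 0 * c 2, d 1 * c 2, c 2 * d 2]

/-- The matrix of coefficients of the quartic forms `bruckBoseVec c c'`, where `c` and `c'` are the
triples of quadratic forms with coefficient matrices `A` and `A'`. -/
def bruckBoseMatrix (A A' : Matrix (Fin 3) (Fin 3) K) : Matrix (Fin 5) (Fin 5) K :=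
  Matrix.of ![mulCoeffs (A 0) (A' 2), mulCoeffs (A 1) (A' 2), mulCoeffs (A' 0) (A 2),
    mulCoeffs (A' 1) (A 2), mulCoeffs (A 2) (A' 2)]

lemma bruckBoseMatrix_mulVec_veronese (A A' : Matrix (Fin 3) (Fin 3) K) (w : Fin 2 → K) :
    bruckBoseMatrix A A' *ᵥ veronese 4 w =
      bruckBoseVec (A *ᵥ veronese 2 w) (A' *ᵥ veronese 2 w) := by
  ext i
  fin_cases i <;> exact mulCoeffs_dotProduct_veronese ..

lemma ofFn_vecMul (u : Fin m → K) (A : Matrix (Fin m) (Fin n) K) :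
    ofFn n (u ᵥ* A) = ∑ i, C (u i) * ofFn n (A i) := by
  rw [vecMul_eq_sum, map_sum]
  simp only [map_smul, smul_eq_C_mul]

lemma eq_zero_of_sum_C_mul_ofFn_eq_zero {A : Matrix (Fin n) (Fin n) K} (hA : IsUnit A.det)
    {u : Fin n → K} (h : ∑ i, C (u i) * ofFn n (A i) = 0) : u = 0 := by
  rw [← ofFn_vecMul] at h
  exact eq_zero_of_vecMul_eq_zero hA.ne_zero (injective_ofFn n (h.trans (map_zero _).symm))

theorem isUnit_det_bruckBoseMatrix {A A' : Matrix (Fin 3) (Fin 3) K} (hA : IsUnit A.det)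
    (hA' : IsUnit A'.det) (h_coprime : IsCoprime (ofFn 3 (A 2)) (ofFn 3 (A' 2)))
    (h_deg : (ofFn 3 (A 2)).natDegree = 2) : IsUnit (bruckBoseMatrix A A').det := by
  rw [isUnit_iff_ne_zero, ne_eq, ← exists_vecMul_eq_zero_iff]
  rintro ⟨u, hu0, hu⟩
  have ha2 : ofFn 3 (A 2) ≠ 0 := fun h => by simp [h] at h_deg
  have h_rel : ofFn 3 (A' 2) * (C (u 0) * ofFn 3 (A 0) + C (u 1) * ofFn 3 (A 1)) = -(ofFn 3 (A 2) *
      (C (u 2) * ofFn 3 (A' 0) + C (u 3) * ofFn 3 (A' 1) + C (u 4) * ofFn 3 (A' 2))) := by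
    have h := ofFn_vecMul u (bruckBoseMatrix A A')
    rw [hu, map_zero, Fin.sum_univ_five] at h
    change 0 = C (u 0) * ofFn 5 (mulCoeffs (A 0) (A' 2)) + C (u 1) * ofFn 5 (mulCoeffs (A 1) (A' 2))
      + C (u 2) * ofFn 5 (mulCoeffs (A' 0) (A 2)) + C (u 3) * ofFn 5 (mulCoeffs (A' 1) (A 2))
      + C (u 4) * ofFn 5 (mulCoeffs (A 2) (A' 2)) at h
    simp only [ofFn_mulCoeffs] at h
    linear_combination -h
  obtain ⟨r, hr⟩ : ofFn 3 (A 2) ∣ C (u 0) * ofFn 3 (A 0) + C (u 1) * ofFn 3 (A 1) :=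
    h_coprime.dvd_of_dvd_mul_left (h_rel ▸ (dvd_mul_right ..).neg_right)
  obtain ⟨s, rfl⟩ : ∃ s : K, r = C s := by
    refine ⟨_, eq_C_of_natDegree_eq_zero ?_⟩
    rcases eq_or_ne r 0 with rfl | hr0
    · exact natDegree_zero
    have h_lt : (C (u 0) * ofFn 3 (A 0) + C (u 1) * ofFn 3 (A 1)).natDegree < 3 := by
      simpa [ofFn_vecMul, Fin.sum_univ_three] using
        ofFn_natDegree_lt le_add_self (![u 0, u 1, 0] ᵥ* A)
    rw [hr, natDegree_mul ha2 hr0, h_deg] at h_lt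
    omega
  have h_left : ![u 0, u 1, -s] = 0 := eq_zero_of_sum_C_mul_ofFn_eq_zero hA (by
    simp only [Fin.sum_univ_three, cons_val, map_neg]
    linear_combination hr)
  have h0 : u 0 = 0 := congrFun h_left 0
  have h1 : u 1 = 0 := congrFun h_left 1
  have h_right : ![u 2, u 3, u 4] = 0 := eq_zero_of_sum_C_mul_ofFn_eq_zero hA' (by
    simpa [h0, h1, ha2, Fin.sum_univ_three] using h_rel)
  refine hu0 (funext fun i => ?_)
  fin_cases i
  exacts [h0, h1, congrFun h_right 0, congrFun h_right 1, congrFun h_right 2]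

end TransversalCoordinates

section BruckBoseCurves

open Polynomial

/-- The permutation of the transversal coordinates induced by conjugation. -/
def conjPerm : Equiv.Perm (Fin 5) := Equiv.swap 0 2 * Equiv.swap 1 3

lemma transversalMatrix_submatrix_conjPerm (t t' : K) :
    (transversalMatrix t t').submatrix conjPerm id = transversalMatrix t' t := by
  ext i j
  fin_cases i <;> fin_cases j <;> rfl

lemma bruckBoseMatrix_submatrix_conjPerm (A A' : Matrix (Fin 3) (Fin 3) K) :
    (bruckBoseMatrix A A').submatrix conjPerm id = bruckBoseMatrix A' A := by
  ext i j
  fin_cases i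
  iterate 4 rfl
  exact congrFun (mulCoeffs_comm (A 2) (A' 2)) j

lemma transversalMatrix_map {E : Type} [Field E] (σ : K →+* E) (t t' : K) :
    (transversalMatrix t t').map σ = transversalMatrix (σ t) (σ t') := by
  ext i j
  fin_cases i <;> fin_cases j <;> simp [transversalMatrix]

lemma bruckBoseMatrix_map {E : Type} [Field E] (σ : K →+* E) (A A' : Matrix (Fin 3) (Fin 3) K) :
    (bruckBoseMatrix A A').map σ = bruckBoseMatrix (A.map σ) (A'.map σ) := by
  ext i j
  fin_cases i <;> exact congrFun (comp_mulCoeffs σ _ _) j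

/-- `N` parametrises the normal rational curve which in transversal coordinates is given by the
quartic forms `bruckBoseMatrix A A'`. This is the curve corresponding to the conic parametrised by
`A` if `A'` and `t'` are conjugate to `A` and `t`. -/
structure IsBruckBoseCurve (t t' : K) (A A' : Matrix (Fin 3) (Fin 3) K)
    (N : Matrix (Fin 5) (Fin 5) K) : Prop where
  ne : t ≠ t'
  isUnit_det : IsUnit A.det
  isUnit_det_conj : IsUnit A'.det
  isUnit_det_curve : IsUnit N.det
  transversalMatrix_mul : transversalMatrix t t' * N = bruckBoseMatrix A A'

theorem exists_isBruckBoseCurve_map_algebraMap {F : Type} [Field F] [Algebra F K]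
    {conj : K →ₐ[F] K} (h_inv : Function.Involutive conj)
    (h_fix : ∀ x, conj x = x → x ∈ Set.range (algebraMap F K)) {t : K} (ht : t ≠ conj t)
    {A : Matrix (Fin 3) (Fin 3) K} (hA : IsUnit A.det) (h_deg : (ofFn 3 (A 2)).natDegree = 2)
    (h_coprime : IsCoprime (ofFn 3 (A 2)) ((ofFn 3 (A 2)).map conj.toRingHom)) :
    ∃ M : Matrix (Fin 5) (Fin 5) F, IsUnit M.det ∧
      IsBruckBoseCurve t (conj t) A (A.map conj) (M.map (algebraMap F K)) := by
  have hA' : IsUnit (A.map conj).det := (isUnit_det_map_iff conj.toRingHom).mpr hA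
  set T := transversalMatrix t (conj t)
  have hT : IsUnit T.det := isUnit_det_transversalMatrix ht
  set N := T⁻¹ * bruckBoseMatrix A (A.map conj)
  have hTN : T * N = bruckBoseMatrix A (A.map conj) := mul_nonsing_inv_cancel_left _ _ hT
  have h_AA : (A.map conj).map conj.toRingHom = A := Matrix.ext fun i j => h_inv (A i j)
  have h_conj : N.map conj = N := by
    have h_map : T.map conj.toRingHom = T.submatrix conjPerm id := by
      rw [transversalMatrix_submatrix_conjPerm, transversalMatrix_map]
      congr
      exact h_inv t
    have h_mul : T * N.map conj.toRingHom = T * N := by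
      have h := congrArg (Matrix.map · conj.toRingHom) hTN
      rw [Matrix.map_mul, h_map, bruckBoseMatrix_map, h_AA, ← bruckBoseMatrix_submatrix_conjPerm]
        at h
      ext i j
      rw [hTN]
      simpa [Matrix.mul_apply] using congrFun₂ h (conjPerm.symm i) j
    exact (isUnit_iff_isUnit_det T).mpr hT |>.mul_left_cancel h_mul
  have hN : IsUnit N.det := by
    rw [det_mul]
    refine (isUnit_nonsing_inv_det T hT).mul (isUnit_det_bruckBoseMatrix hA hA' ?_ h_deg)
    rwa [map_ofFn] at h_coprime
  choose M hM using fun i j => h_fix (N i j) (congrFun₂ h_conj i j)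
  have hMN : (Matrix.of M).map (algebraMap F K) = N := Matrix.ext hM
  refine ⟨Matrix.of M, (isUnit_det_map_iff (algebraMap F K)).mp (hMN ▸ hN), ht, hA, hA', ?_, ?_⟩
  · rwa [hMN]
  · rwa [hMN]

end BruckBoseCurves

section PointsAtInfinity

lemma ptInfVec_apply_two (o : Option K) : ptInfVec o 2 = 0 := by
  cases o <;> rfl

lemma ptInf_mem_projPt (o : Option K) : ptInf o ∈ projPt (ptInfVec o) :=
  mk_mem_projPt (ptInfVec_ne o)

lemma ptInf_mem_linf (o : Option K) : ptInf o ∈ linf K :=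
  (mem_linf_iff (ptInf_mem_projPt o)).mpr (ptInfVec_apply_two o)

lemma ptInf_injective : Function.Injective (ptInf (K := K)) := by
  intro o o' h
  obtain ⟨a, ha⟩ := (Projectivization.mk_eq_mk_iff' ..).mp h
  have h0 := congrFun ha 0
  have h1 := congrFun ha 1
  cases o <;> cases o' <;> simp_all [ptInfVec]

lemma gptVec_eq (t : K) (q : ℕ) (o : Option K) :
    gptVec t q o = ptInfVec o 0 • A0v t q + ptInfVec o 1 • A1v t q := by
  cases o <;> simp [gptVec, ptInfVec]

lemma gpt_injective (t : K) (q : ℕ) : Function.Injective (gpt t q) := by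
  intro o o' h
  obtain ⟨a, ha⟩ := (Projectivization.mk_eq_mk_iff' ..).mp h
  refine ptInf_injective ((Projectivization.mk_eq_mk_iff' ..).mpr ⟨a, ?_⟩)
  rw [gptVec_eq, gptVec_eq] at ha
  have h1 := congrFun ha 1
  have h3 := congrFun ha 3
  simp only [A0v, A1v] at h1 h3
  ext i
  fin_cases i
  · simpa using h1
  · simpa using h3
  · simp [ptInfVec_apply_two]

lemma exists_ptInfVec_smul_eq (x y : K) :
    ∃ (o : Option K) (a : K), a * ptInfVec o 0 = x ∧ a * ptInfVec o 1 = y := by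
  by_cases hy : y = 0
  · exact ⟨none, x, by simp [ptInfVec, hy]⟩
  · exact ⟨some (x / y), y, by simp [ptInfVec, mul_div_cancel₀, hy]⟩

lemma linf_eq_range_ptInf : linf K = Set.range ptInf := by
  refine Set.Subset.antisymm (fun p (hp : p.rep 2 = 0) => ?_)
    (Set.range_subset_iff.mpr ptInf_mem_linf)
  obtain ⟨o, a, h0, h1⟩ := exists_ptInfVec_smul_eq (p.rep 0) (p.rep 1)
  refine ⟨o, ?_⟩
  rw [← p.mk_rep, eq_comm]
  refine (Projectivization.mk_eq_mk_iff' ..).mpr ⟨a, ?_⟩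
  ext i
  fin_cases i
  exacts [h0, h1, by simp [ptInfVec_apply_two, hp]]

lemma gline_eq_range_gpt (t : K) (q : ℕ) : gline t q = Set.range (gpt t q) := by
  ext p
  have h_mem : p ∈ gline t q ↔ ∃ x y, x • A0v t q + y • A1v t q = p.rep :=
    Submodule.mem_span_pair
  rw [h_mem]
  constructor
  · rintro ⟨x, y, hp⟩
    obtain ⟨o, a, rfl, rfl⟩ := exists_ptInfVec_smul_eq x y
    refine ⟨o, ?_⟩
    rw [← p.mk_rep, eq_comm]
    refine (Projectivization.mk_eq_mk_iff' ..).mpr ⟨a, ?_⟩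
    rw [← hp, gptVec_eq, smul_add, smul_smul, smul_smul]
  · rintro ⟨o, rfl⟩
    obtain ⟨a, ha⟩ := mem_projPt_iff.mp (mk_mem_projPt (gptVec_ne t q o))
    refine ⟨a * ptInfVec o 0, a * ptInfVec o 1, ?_⟩
    rw [gpt, ha, gptVec_eq, smul_add, smul_smul, smul_smul]

lemma gline_eq_gqline (t : K) (q : ℕ) : gline t q = gqline (t ^ q) := rfl

lemma mem_gqline {t : K} {v : Fin 5 → K} {p : PP K 5} (hp : p ∈ projPt v)
    (hx : v 0 + t * v 1 = 0) (hy : v 2 + t * v 3 = 0) (hz : v 4 = 0) : p ∈ gqline t := by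
  refine (mem_ptsOf_iff hp _).mpr (Submodule.mem_span_pair.mpr ⟨-v 1, -v 3, ?_⟩)
  ext i
  fin_cases i <;> simp [B0v, B1v, hz]
  · linear_combination -hx
  · linear_combination -hy

lemma exists_smul_bruckBoseVec_eq_iff {c c' d : Fin 3 → K} {s : K} (hs : s ≠ 0) (hc' : c' ≠ 0)
    (h_ne : bruckBoseVec c c' ≠ 0) (hd : d ≠ 0) (hd2 : d 2 = 0) :
    (∃ a : K, a • bruckBoseVec c c' = s • ![d 0, d 1, 0, 0, 0]) ↔ ∃ a : K, a • c = d := by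
  have h_two (hc2 : c 2 = 0) : bruckBoseVec c c' = c' 2 • ![c 0, c 1, 0, 0, 0] := by
    ext i
    fin_cases i <;> simp [bruckBoseVec, hc2, mul_comm]
  constructor
  · rintro ⟨a, ha⟩
    have ha0 : a ≠ 0 := by
      rintro rfl
      rw [zero_smul, eq_comm, smul_eq_zero_iff_right hs] at ha
      refine hd (funext fun i => ?_)
      fin_cases i
      exacts [congrFun ha 0, congrFun ha 1, hd2]
    have hc2 : c 2 = 0 := by
      by_contra hc2
      refine hc' (funext fun i => ?_)
      fin_cases i
      · simpa [bruckBoseVec, ha0, hc2] using congrFun ha 2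
      · simpa [bruckBoseVec, ha0, hc2] using congrFun ha 3
      · simpa [bruckBoseVec, ha0, hc2] using congrFun ha 4
    rw [h_two hc2] at ha
    have h0 : a * (c' 2 * c 0) = s * d 0 := congrFun ha 0
    have h1 : a * (c' 2 * c 1) = s * d 1 := congrFun ha 1
    refine ⟨a * c' 2 / s, funext fun i => ?_⟩
    fin_cases i <;>
      simp only [Fin.zero_eta, Fin.mk_one, Fin.reduceFinMk, Pi.smul_apply, smul_eq_mul]
    · field_simp; linear_combination h0
    · field_simp; linear_combination h1
    · rw [hc2, hd2, mul_zero]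
  · rintro ⟨a, rfl⟩
    have hc2 : c 2 = 0 := (mul_eq_zero_iff_left (left_ne_zero_of_smul hd)).mp hd2
    rw [h_two hc2] at h_ne ⊢
    have hc2' : c' 2 ≠ 0 := left_ne_zero_of_smul h_ne
    refine ⟨s * a / c' 2, funext fun i => ?_⟩
    fin_cases i <;> simp <;> field_simp

end PointsAtInfinity

namespace IsBruckBoseCurve

variable {t t' : K} {q : ℕ} {A A' : Matrix (Fin 3) (Fin 3) K} {N : Matrix (Fin 5) (Fin 5) K}

lemma map {E : Type} [Field E] (h : IsBruckBoseCurve t t' A A' N) (σ : K →+* E) :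
    IsBruckBoseCurve (σ t) (σ t') (A.map σ) (A'.map σ) (N.map σ) where
  ne := σ.injective.ne h.ne
  isUnit_det := (isUnit_det_map_iff σ).mpr h.isUnit_det
  isUnit_det_conj := (isUnit_det_map_iff σ).mpr h.isUnit_det_conj
  isUnit_det_curve := (isUnit_det_map_iff σ).mpr h.isUnit_det_curve
  transversalMatrix_mul := by
    rw [← transversalMatrix_map, ← Matrix.map_mul, h.transversalMatrix_mul, bruckBoseMatrix_map]

lemma transversalMatrix_mulVec (h : IsBruckBoseCurve t t' A A' N) (w : Fin 2 → K) :
    transversalMatrix t t' *ᵥ N *ᵥ veronese 4 w =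
      bruckBoseVec (A *ᵥ veronese 2 w) (A' *ᵥ veronese 2 w) := by
  rw [mulVec_mulVec, h.transversalMatrix_mul, bruckBoseMatrix_mulVec_veronese]

lemma mulVec_veronese_apply_four (h : IsBruckBoseCurve t t' A A' N) (w : Fin 2 → K) :
    (N *ᵥ veronese 4 w) 4 = (A *ᵥ veronese 2 w) 2 * (A' *ᵥ veronese 2 w) 2 := by
  have h4 := congrFun (h.transversalMatrix_mulVec w) 4
  rwa [BaerConics.transversalMatrix_mulVec] at h4

theorem mem_gline_union_gqline (h : IsBruckBoseCurve t (t ^ q) A A' N) {p : PP K 5}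
    (hp : p ∈ mimg N (nrcVecs Set.univ)) (hp_inf : p ∈ sinf K) : p ∈ gline t q ∪ gqline t := by
  obtain ⟨w, -, hw⟩ := mem_mimg_nrcVecs_univ_iff.mp hp
  have h4 := (mem_sinf_iff hw).mp hp_inf
  have h_eq := h.transversalMatrix_mulVec w
  rw [BaerConics.transversalMatrix_mulVec] at h_eq
  rcases mul_eq_zero.mp ((h.mulVec_veronese_apply_four w).symm.trans h4) with hz | hz
  · left
    rw [gline_eq_gqline]
    exact mem_gqline hw ((congrFun h_eq 2).trans (by simp [bruckBoseVec, hz]))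
      ((congrFun h_eq 3).trans (by simp [bruckBoseVec, hz])) h4
  · right
    exact mem_gqline hw ((congrFun h_eq 0).trans (by simp [bruckBoseVec, hz]))
      ((congrFun h_eq 1).trans (by simp [bruckBoseVec, hz])) h4

theorem gpt_mem_iff (h : IsBruckBoseCurve t (t ^ q) A A' N) (o : Option K) :
    gpt t q o ∈ mimg N (nrcVecs Set.univ) ↔ ptInf o ∈ mimg A (conicVecs Set.univ) := by
  set d := ptInfVec o
  have hd2 : d 2 = 0 := ptInfVec_apply_two o
  have hT := isUnit_det_transversalMatrix h.ne
  have h_sub : t ^ q - t ≠ 0 := sub_ne_zero.mpr h.ne.symm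
  have h_gpt : transversalMatrix t (t ^ q) *ᵥ gptVec t q o =
      (t ^ q - t) • ![d 0, d 1, 0, 0, 0] := by
    rw [gptVec_eq, BaerConics.transversalMatrix_mulVec]
    ext i
    fin_cases i <;> simp [A0v, A1v, d] <;> ring
  rw [mem_mimg_nrcVecs_univ_iff, mem_mimg_conicVecs_univ_iff]
  refine exists_congr fun w => and_congr_right fun hw => ?_
  rw [gpt, ptInf, mk_mem_projPt_iff, mk_mem_projPt_iff]
  set c := A *ᵥ veronese 2 w
  set c' := A' *ᵥ veronese 2 w
  have hn : bruckBoseVec c c' ≠ 0 := by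
    rw [← h.transversalMatrix_mulVec]
    exact mulVec_ne_zero hT (mulVec_ne_zero h.isUnit_det_curve (veronese_ne_zero hw))
  have h_iff (a : K) : a • N *ᵥ veronese 4 w = gptVec t q o ↔
      a • bruckBoseVec c c' = (t ^ q - t) • ![d 0, d 1, 0, 0, 0] := by
    rw [← (mulVec_inj _ hT).eq_iff, mulVec_smul, h.transversalMatrix_mulVec, h_gpt]
  simp_rw [h_iff]
  exact exists_smul_bruckBoseVec_eq_iff h_sub
    (mulVec_ne_zero h.isUnit_det_conj (veronese_ne_zero hw)) hn (ptInfVec_ne o) hd2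

theorem inter_gline_eq (h : IsBruckBoseCurve t (t ^ q) A A' N) :
    mimg N (nrcVecs Set.univ) ∩ gline t q =
      gpt t q '' {o | ptInf o ∈ mimg A (conicVecs Set.univ)} := by
  simp_rw [gline_eq_range_gpt, ← h.gpt_mem_iff]
  exact (Set.image_preimage_eq_inter_range ..).symm

end IsBruckBoseCurve

section ExtensionsAtInfinity

variable {E : Type} [Field E]

lemma inter_linf_eq (X : Set (PP K 3)) : X ∩ linf K = ptInf '' {o | ptInf o ∈ X} := by
  rw [linf_eq_range_ptInf]
  exact (Set.image_preimage_eq_inter_range ..).symm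

lemma mimg_conicVecs_inter_linf_eq_empty_iff {F : Type} [Field F] [Algebra F K]
    {A : Matrix (Fin 3) (Fin 3) K} (hA : IsUnit A.det) :
    mimg A (conicVecs (Set.range (algebraMap F K))) ∩ linf K = ∅ ↔
      ∀ w : Fin 2 → F, w ≠ 0 → (A *ᵥ veronese 2 (algVec F w)) 2 ≠ 0 := by
  rw [Set.eq_empty_iff_forall_notMem]
  constructor
  · intro h w hw hz
    have hp := mk_mem_projPt (mulVec_ne_zero hA (veronese_ne_zero (algVec_ne_zero hw)))
    exact h _ ⟨(mem_mimg_conicVecs_iff F).mpr ⟨w, hw, hp⟩, (mem_linf_iff hp).mpr hz⟩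
  · rintro h p ⟨hp, hp_inf⟩
    obtain ⟨w, hw, hp⟩ := (mem_mimg_conicVecs_iff F).mp hp
    exact h w hw ((mem_linf_iff hp).mp hp_inf)

lemma mimg_conicVecs_univ_inter_linf_eq_empty_iff {A : Matrix (Fin 3) (Fin 3) K}
    (hA : IsUnit A.det) :
    mimg A (conicVecs Set.univ) ∩ linf K = ∅ ↔
      ∀ w : Fin 2 → K, w ≠ 0 → (A *ᵥ veronese 2 w) 2 ≠ 0 := by
  have h := mimg_conicVecs_inter_linf_eq_empty_iff (F := K) hA
  rwa [Algebra.algebraMap_self, RingHom.coe_id, Set.range_id] at h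

lemma mapVec_veronese (σ : K →+* E) (w : Fin 2 → K) :
    mapVec σ (veronese n w) = veronese n (mapVec σ w) := by
  ext i
  simp [mapVec, veronese]

lemma mapVec_mulVec (σ : K →+* E) (M : Matrix (Fin m) (Fin n) K) (v : Fin n → K) :
    mapVec σ (M *ᵥ v) = M.map σ *ᵥ mapVec σ v :=
  funext fun i => RingHom.map_mulVec σ M v i

lemma inv_map_mulVec_mapVec (σ : K →+* E) {M : Matrix (Fin n) (Fin n) K} (hM : IsUnit M.det)
    (v : Fin n → K) : (M.map σ)⁻¹ *ᵥ mapVec σ v = mapVec σ (M⁻¹ *ᵥ v) := by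
  have hM' : IsUnit (M.map σ).det := (isUnit_det_map_iff σ).mpr hM
  refine mulVec_inj _ hM' ?_
  rw [← mapVec_mulVec, mulVec_mulVec, mulVec_mulVec, mul_nonsing_inv _ hM', mul_nonsing_inv _ hM,
    one_mulVec, one_mulVec]

lemma mapVec_ptInfVec (σ : K →+* E) (o : Option K) :
    mapVec σ (ptInfVec o) = ptInfVec (o.map σ) := by
  ext i
  cases o <;> fin_cases i <;> simp [mapVec, ptInfVec]

lemma mapVec_gptVec (σ : K →+* E) (t : K) (q : ℕ) (o : Option K) :
    mapVec σ (gptVec t q o) = gptVec (σ t) q (o.map σ) := by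
  ext i
  cases o <;> fin_cases i <;> simp [mapVec, gptVec, A0v, A1v]

lemma gKinL_eq (σ : K →+* E) (t : K) (q : ℕ) :
    gKinL σ t q = Set.range fun o : Option K => gpt (σ t) q (o.map σ) := by
  ext p
  rw [gKinL, Set.mem_iUnion]
  refine exists_congr fun o => ?_
  rw [mapVec_gptVec]
  exact ⟨fun ⟨_, h⟩ => h.symm, fun h => ⟨gptVec_ne _ _ _, h.symm⟩⟩

lemma glineL_eq_gline (σ : K →+* E) (t : K) (q : ℕ) : glineL σ t q = gline (σ t) q := by
  rw [glineL, gline]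
  congr <;> ext i <;> fin_cases i <;> simp [mapVec, A0v, A1v]

lemma gqlineL_eq_gqline (σ : K →+* E) (t : K) : gqlineL σ t = gqline (σ t) := by
  rw [gqlineL, gqline]
  congr <;> ext i <;> fin_cases i <;> simp [mapVec, B0v, B1v]

lemma ptInf_map_mem_mimg_map_conicVecs_iff (σ : K →+* E) {A : Matrix (Fin 3) (Fin 3) K}
    (hA : IsUnit A.det) (o : Option K) :
    ptInf (o.map σ) ∈ mimg (A.map σ) (conicVecs Set.univ) ↔
      ptInf o ∈ mimg A (conicVecs Set.univ) := by
  have hA' : IsUnit (A.map σ).det := (isUnit_det_map_iff σ).mpr hA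
  have h_qeval (v : Fin 3 → K) :
      qeval (conicMatrix E) (mapVec σ v) = σ (qeval (conicMatrix K) v) := by
    simp [qeval_conicMatrix, mapVec]
  rw [mem_mimg_conicVecs_univ_iff_qeval hA (ptInf_mem_projPt o),
    mem_mimg_conicVecs_univ_iff_qeval hA' (ptInf_mem_projPt (o.map σ)),
    ← mapVec_ptInfVec, inv_map_mulVec_mapVec σ hA, h_qeval, map_eq_zero]

lemma mimg_map_conicVecs_univ_inter_linf_eq_empty {σ : K →+* K} (hσ : Function.Bijective σ)
    {A : Matrix (Fin 3) (Fin 3) K} (hA : IsUnit A.det)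
    (h : mimg A (conicVecs Set.univ) ∩ linf K = ∅) :
    mimg (A.map σ) (conicVecs Set.univ) ∩ linf K = ∅ := by
  rw [mimg_conicVecs_univ_inter_linf_eq_empty_iff hA] at h
  rw [mimg_conicVecs_univ_inter_linf_eq_empty_iff ((isUnit_det_map_iff σ).mpr hA)]
  intro w hw
  obtain ⟨u, rfl⟩ : ∃ u, mapVec σ u = w := hσ.surjective.comp_left w
  have hu : u ≠ 0 := by
    rintro rfl
    exact hw (funext fun _ => map_zero σ)
  rw [← mapVec_veronese, ← mapVec_mulVec]
  exact (map_ne_zero σ).mpr (h u hu)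

end ExtensionsAtInfinity

section ConicsAtInfinity

open Polynomial

variable {A : Matrix (Fin 3) (Fin 3) K}

lemma mulVec_veronese_two_apply_two (A : Matrix (Fin 3) (Fin 3) K) (θ : K) :
    (A *ᵥ veronese 2 ![1, θ]) 2 = (ofFn 3 (A 2)).eval θ :=
  (eval_ofFn (A 2) θ).symm

lemma natDegree_ofFn_three {a : Fin 3 → K} (ha : a 2 ≠ 0) : (ofFn 3 a).natDegree = 2 := by
  refine natDegree_eq_of_le_of_coeff_ne_zero
    (Nat.lt_succ_iff.mp (ofFn_natDegree_lt (by omega) a)) ?_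
  rwa [ofFn_coeff_eq_val_of_lt a (by omega)]

lemma ofFn_ne_C_mul_map {F : Type} [Field F] [Algebra F K] {a : Fin n → K}
    (ha : ∀ (c : K) (f : Fin n → F), a ≠ c • algVec F f) (c : K) (d : F[X]) :
    ofFn n a ≠ C c * d.map (algebraMap F K) := by
  refine fun h => ha c (fun i => d.coeff i) (funext fun i => ?_)
  rw [← ofFn_coeff_eq_val_of_lt a i.isLt, h, coeff_C_mul, coeff_map]
  rfl

lemma mimg_conicVecs_univ_inter_linf_eq_image (hA : IsUnit A.det) (h22 : A 2 2 ≠ 0) :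
    mimg A (conicVecs Set.univ) ∩ linf K =
      (fun θ : K => Projectivization.mk K (A *ᵥ veronese 2 ![1, θ])
        (mulVec_ne_zero hA (veronese_ne_zero (by simp)))) '' {θ | (ofFn 3 (A 2)).IsRoot θ} := by
  ext p
  constructor
  · rintro ⟨hp, hp_inf⟩
    obtain ⟨w, hw, hp⟩ := mem_mimg_conicVecs_univ_iff.mp hp
    obtain ⟨c, hc, ⟨θ, rfl⟩ | rfl⟩ := exists_smul_eq_of_ne_zero hw <;>
      rw [veronese_smul, mulVec_smul, projPt_smul (pow_ne_zero _ hc)] at hp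
    · refine ⟨θ, ?_, hp.choose_spec.symm⟩
      exact (mulVec_veronese_two_apply_two A θ).symm.trans ((mem_linf_iff hp).mp hp_inf)
    · refine absurd ((mem_linf_iff hp).mp hp_inf) ?_
      simpa [veronese_two, mulVec, dotProduct, Fin.sum_univ_three] using h22
  · rintro ⟨θ, hθ, rfl⟩
    refine ⟨mem_mimg_conicVecs_univ_iff.mpr ⟨_, by simp, mk_mem_projPt _⟩, ?_⟩
    exact (mem_linf_iff (mk_mem_projPt _)).mpr ((mulVec_veronese_two_apply_two A θ).trans hθ)

lemma ncard_mimg_conicVecs_univ_inter_linf (hA : IsUnit A.det) (h22 : A 2 2 ≠ 0) :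
    (mimg A (conicVecs Set.univ) ∩ linf K).ncard = {θ | (ofFn 3 (A 2)).IsRoot θ}.ncard := by
  rw [mimg_conicVecs_univ_inter_linf_eq_image hA h22]
  refine Set.ncard_image_of_injective _ fun θ θ' h => ?_
  obtain ⟨a, ha⟩ := (Projectivization.mk_eq_mk_iff' ..).mp h
  rw [← mulVec_smul] at ha
  have h_eq := mulVec_inj A hA ha
  have h0 : a = 1 := by simpa [veronese_two] using congrFun h_eq 0
  simpa [veronese_two, h0, eq_comm] using congrFun h_eq 1

theorem ncard_mimg_map_conicVecs_univ_inter_linf_eq_two {L : Type} [Field L] [Finite K] [Finite L]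
    [Algebra K L] (hL : 2 ∣ Module.finrank K L) (hA : IsUnit A.det)
    (h : mimg A (conicVecs Set.univ) ∩ linf K = ∅) :
    (mimg (A.map (algebraMap K L)) (conicVecs Set.univ) ∩ linf L).ncard = 2 := by
  rw [mimg_conicVecs_univ_inter_linf_eq_empty_iff hA] at h
  have h22 : A 2 2 ≠ 0 := by
    simpa [veronese_two, mulVec, dotProduct, Fin.sum_univ_three] using h ![0, 1] (by simp)
  set f : K[X] := ofFn 3 (A 2)
  have h_deg : f.natDegree = 2 := natDegree_ofFn_three h22
  have hf : Irreducible f := by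
    refine irreducible_of_degree_le_three_of_not_isRoot (by simp [h_deg]) fun θ => ?_
    rw [IsRoot, ← mulVec_veronese_two_apply_two]
    exact h _ (by simp)
  have h_roots : {θ : L | (ofFn 3 (A.map (algebraMap K L) 2)).IsRoot θ} = f.rootSet L := by
    ext θ
    rw [mem_rootSet, ← eval_map_algebraMap, map_ofFn]
    exact (and_iff_right hf.ne_zero).symm
  rw [ncard_mimg_conicVecs_univ_inter_linf ((isUnit_det_map_iff _).mpr hA)
    ((map_ne_zero (algebraMap K L)).mpr h22), h_roots, ← Nat.card_coe_set_eq,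
    Nat.card_eq_fintype_card, card_rootSet_eq_natDegree_of_dvd_finrank hf (h_deg ▸ hL), h_deg]

end ConicsAtInfinity

namespace IsBruckBoseCurve

variable {t t' : K} {q : ℕ} {A A' : Matrix (Fin 3) (Fin 3) K} {N : Matrix (Fin 5) (Fin 5) K}

theorem inter_gline_eq_singleton (h : IsBruckBoseCurve t (t ^ q) A A' N) {o : Option K}
    (ho : mimg A (conicVecs Set.univ) ∩ linf K = {ptInf o}) :
    mimg N (nrcVecs Set.univ) ∩ gline t q = {gpt t q o} := by
  rw [inter_linf_eq, ← Set.image_singleton, ptInf_injective.image_injective.eq_iff] at ho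
  rw [h.inter_gline_eq, ho, Set.image_singleton]

theorem ncard_inter_gline (h : IsBruckBoseCurve t (t ^ q) A A' N) :
    (mimg N (nrcVecs Set.univ) ∩ gline t q).ncard =
      (mimg A (conicVecs Set.univ) ∩ linf K).ncard := by
  rw [h.inter_gline_eq, inter_linf_eq, Set.ncard_image_of_injective _ (gpt_injective t q),
    Set.ncard_image_of_injective _ ptInf_injective]

theorem inter_sinf_eq_empty (h : IsBruckBoseCurve t t' A A' N)
    (hA : mimg A (conicVecs Set.univ) ∩ linf K = ∅)
    (hA' : mimg A' (conicVecs Set.univ) ∩ linf K = ∅) :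
    mimg N (nrcVecs Set.univ) ∩ sinf K = ∅ := by
  rw [mimg_conicVecs_univ_inter_linf_eq_empty_iff h.isUnit_det] at hA
  rw [mimg_conicVecs_univ_inter_linf_eq_empty_iff h.isUnit_det_conj] at hA'
  refine Set.eq_empty_of_forall_notMem fun p ⟨hp, hp_inf⟩ => ?_
  obtain ⟨w, hw, hp⟩ := mem_mimg_nrcVecs_univ_iff.mp hp
  refine mul_ne_zero (hA w hw) (hA' w hw) ?_
  rw [← h.mulVec_veronese_apply_four]
  exact (mem_sinf_iff hp).mp hp_inf

theorem inter_gKinL_eq_empty {E : Type} [Field E] {σ : K →+* E} {A₀ : Matrix (Fin 3) (Fin 3) K}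
    {A' : Matrix (Fin 3) (Fin 3) E} {N : Matrix (Fin 5) (Fin 5) E}
    (h : IsBruckBoseCurve (σ t) (σ t ^ q) (A₀.map σ) A' N)
    (hA : mimg A₀ (conicVecs Set.univ) ∩ linf K = ∅) :
    mimg N (nrcVecs Set.univ) ∩ gKinL σ t q = ∅ := by
  rw [gKinL_eq, Set.eq_empty_iff_forall_notMem]
  rintro _ ⟨hp, o, rfl⟩
  have hA₀ : IsUnit A₀.det := (isUnit_det_map_iff σ).mp h.isUnit_det
  rw [h.gpt_mem_iff, ptInf_map_mem_mimg_map_conicVecs_iff σ hA₀] at hp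
  exact hA.subset ⟨hp, ptInf_mem_linf o⟩

end IsBruckBoseCurve

section AffineConics

variable {F : Type} [Field F] [Algebra F K] {conj : K →ₐ[F] K} {t : K}
  {A : Matrix (Fin 3) (Fin 3) K} {M : Matrix (Fin 5) (Fin 5) F} {c0 c1 : K → F}

theorem exists_isBruckBoseCurve_of_inter_linf_eq_empty (h_inv : Function.Involutive conj)
    (h_fix : ∀ x, conj x = x → x ∈ Set.range (algebraMap F K)) (ht : t ≠ conj t)
    (hA : IsUnit A.det)
    (h_conic : mimg A (conicVecs (Set.range (algebraMap F K))) ∩ linf K = ∅)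
    (h_subplane : (mimg A (subplaneVecs F K) ∩ linf K).Subsingleton) :
    ∃ M : Matrix (Fin 5) (Fin 5) F, IsUnit M.det ∧
      IsBruckBoseCurve t (conj t) A (A.map conj) (M.map (algebraMap F K)) := by
  rw [mimg_conicVecs_inter_linf_eq_empty_iff hA] at h_conic
  have h_one (θ : F) : algVec F (K := K) ![1, θ] = ![1, algebraMap F K θ] := by
    ext i
    fin_cases i <;> simp [algVec]
  have h20 : A 2 0 ≠ 0 := by
    simpa [algVec, veronese_two, mulVec, dotProduct, Fin.sum_univ_three] using
      h_conic ![1, 0] (by simp)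
  have h22 : A 2 2 ≠ 0 := by
    simpa [algVec, veronese_two, mulVec, dotProduct, Fin.sum_univ_three] using
      h_conic ![0, 1] (by simp)
  refine exists_isBruckBoseCurve_map_algebraMap h_inv h_fix ht hA (natDegree_ofFn_three h22)
    (isCoprime_map_of_natDegree_eq_two h_inv h_fix (natDegree_ofFn_three h22) (fun θ => ?_)
      (ofFn_ne_C_mul_map (row_two_ne_smul_algVec hA h20 h_subplane)))
  rw [← mulVec_veronese_two_apply_two, ← h_one]
  exact h_conic _ (by simp)

lemma transversalMatrix_mulVec_algVec_bbVec
    (hc : ∀ x, x = algebraMap F K (c0 x) + algebraMap F K (c1 x) * t) {c : Fin 3 → K}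
    {p : PP K 3} (hp : p ∈ projPt c) (hc2 : c 2 ≠ 0) :
    transversalMatrix t (conj t) *ᵥ algVec F (bbVec c0 c1 p) =
      (c 2 * conj (c 2))⁻¹ • bruckBoseVec c (mapVec conj.toRingHom c) := by
  have h_div (i : Fin 3) : p.rep i / p.rep 2 = c i / c 2 := by
    obtain ⟨a, ha, h⟩ := exists_rep_eq_smul hp
    rw [h, Pi.smul_apply, Pi.smul_apply, smul_eq_mul, smul_eq_mul, mul_div_mul_left _ _ ha]
  have h_conj (x : K) : conj x = algebraMap F K (c0 x) + conj t * algebraMap F K (c1 x) := by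
    conv_lhs => rw [hc x]
    rw [map_add, map_mul, conj.commutes, conj.commutes, mul_comm]
  have h_id (x : K) : x = algebraMap F K (c0 x) + t * algebraMap F K (c1 x) := by
    rw [mul_comm]
    exact hc x
  have hc2' : conj (c 2) ≠ 0 := (map_ne_zero conj).mpr hc2
  rw [transversalMatrix_mulVec]
  ext i
  fin_cases i <;>
    simp [algVec, bbVec, h_div, ← h_id, ← h_conj, bruckBoseVec, mapVec] <;> field_simp

theorem bb_mem_projPt
    (h : IsBruckBoseCurve t (conj t) A (A.map conj) (M.map (algebraMap F K)))
    (hc : ∀ x, x = algebraMap F K (c0 x) + algebraMap F K (c1 x) * t) {w : Fin 2 → F}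
    (hw : (A *ᵥ veronese 2 (algVec F w)) 2 ≠ 0) {p : PP K 3}
    (hp : p ∈ projPt (A *ᵥ veronese 2 (algVec F w))) :
    bb c0 c1 p ∈ projPt (M *ᵥ veronese 4 w) := by
  set c := A *ᵥ veronese 2 (algVec F w)
  have h_conj : mapVec conj.toRingHom c = A.map conj *ᵥ veronese 2 (algVec F w) := by
    rw [mapVec_mulVec, mapVec_veronese]
    congr 2
    exact funext fun i => conj.commutes (w i)
  have h_alg : algVec F (K := K) (M *ᵥ veronese 4 w) =
      M.map (algebraMap F K) *ᵥ veronese 4 (algVec F w) := by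
    rw [← algVec_veronese, map_mulVec_algVec]
  have h4 : algebraMap F K ((M *ᵥ veronese 4 w) 4) = c 2 * conj (c 2) := by
    refine (congrFun h_alg 4).trans ((h.mulVec_veronese_apply_four _).trans ?_)
    rw [← h_conj]
    rfl
  refine (mk_mem_projPt_iff _).mpr ⟨((M *ᵥ veronese 4 w) 4)⁻¹, algVec_injective (K := K) ?_⟩
  refine mulVec_inj _ (isUnit_det_transversalMatrix h.ne) ?_
  rw [transversalMatrix_mulVec_algVec_bbVec hc hp hw, algVec_smul, map_inv₀, h4, mulVec_smul, h_alg,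
    h.transversalMatrix_mulVec, h_conj]

theorem image_bb_mimg_conicVecs
    (h : IsBruckBoseCurve t (conj t) A (A.map conj) (M.map (algebraMap F K)))
    (hc : ∀ x, x = algebraMap F K (c0 x) + algebraMap F K (c1 x) * t)
    (h_conic : mimg A (conicVecs (Set.range (algebraMap F K))) ∩ linf K = ∅) :
    bb c0 c1 '' mimg A (conicVecs (Set.range (algebraMap F K))) =
      mimg M (nrcVecs Set.univ) := by
  rw [mimg_conicVecs_inter_linf_eq_empty_iff h.isUnit_det] at h_conic
  ext p
  rw [mem_mimg_nrcVecs_univ_iff]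
  constructor
  · rintro ⟨p, hp, rfl⟩
    obtain ⟨w, hw, hp⟩ := (mem_mimg_conicVecs_iff F).mp hp
    exact ⟨w, hw, bb_mem_projPt h hc (h_conic w hw) hp⟩
  · rintro ⟨w, hw, hp⟩
    have h_mk := mk_mem_projPt
      (mulVec_ne_zero h.isUnit_det (veronese_ne_zero (n := 2) (algVec_ne_zero hw)))
    exact ⟨_, (mem_mimg_conicVecs_iff F).mpr ⟨w, hw, h_mk⟩,
      eq_of_mem_projPt (bb_mem_projPt h hc (h_conic w hw) h_mk) hp⟩

lemma image_bb_inter_sinf_eq_empty {F : Type} [Field F] (c0 c1 : K → F) (X : Set (PP K 3)) :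
    bb c0 c1 '' X ∩ sinf F = ∅ := by
  rw [Set.eq_empty_iff_forall_notMem]
  rintro _ ⟨⟨p, -, rfl⟩, h⟩
  exact one_ne_zero ((mem_sinf_iff (mk_mem_projPt _)).mp h)

end AffineConics

lemma IsBruckBoseCurve.map_algebraMap {F L : Type} [Field F] [Field L] [Algebra F K] [Algebra K L]
    [Algebra F L] [IsScalarTower F K L] {t : K} {q : ℕ} {A A' : Matrix (Fin 3) (Fin 3) K}
    {M : Matrix (Fin 5) (Fin 5) F}
    (h : IsBruckBoseCurve t (t ^ q) A A' (M.map (algebraMap F K))) :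
    IsBruckBoseCurve (algebraMap K L t) (algebraMap K L t ^ q) (A.map (algebraMap K L))
      (A'.map (algebraMap K L)) (M.map (algebraMap F L)) := by
  have h_ext := h.map (algebraMap K L)
  rwa [map_pow, Matrix.map_map (f := algebraMap F K), ← RingHom.coe_comp,
    ← IsScalarTower.algebraMap_eq] at h_ext

theorem exists_isBruckBoseCurve_frobenius {F : Type} [Field F] [Fintype F] [Fintype K] [Algebra F K]
    (hF : 3 ≤ Fintype.card F) (hK : Fintype.card K = Fintype.card F ^ 2) {t : K}
    (ht : t ∉ Set.range (algebraMap F K)) {A N : Matrix (Fin 3) (Fin 3) K} (hA : IsUnit A.det)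
    (hN : IsUnit N.det)
    (hAN : mimg A (conicVecs (Set.range (algebraMap F K))) ⊆ mimg N (subplaneVecs F K))
    (h_conic : mimg A (conicVecs (Set.range (algebraMap F K))) ∩ linf K = ∅)
    (h_subplane : (mimg N (subplaneVecs F K) ∩ linf K).Subsingleton) :
    ∃ M : Matrix (Fin 5) (Fin 5) F, IsUnit M.det ∧
      IsBruckBoseCurve t (t ^ Fintype.card F) A (A.map (FiniteField.frobeniusAlgHom F K))
        (M.map (algebraMap F K)) := by
  have h_fix (x : K) (hx : FiniteField.frobeniusAlgHom F K x = x) :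
      x ∈ Set.range (algebraMap F K) :=
    mem_range_algebraMap_of_pow_card_eq hx
  exact exists_isBruckBoseCurve_of_inter_linf_eq_empty (frobeniusAlgHom_involutive hK) h_fix
    (fun h => ht (h_fix t h.symm)) hA h_conic
    (h_subplane.anti (Set.inter_subset_inter_left _
      (mimg_subplaneVecs_subset_of_mimg_conicVecs_subset hF hA hN hAN)))

theorem statement_18_general
    {F K : Type} [Field F] [Field K] [Fintype F] [Fintype K] [Algebra F K]
    (q : ℕ) (hq : Fintype.card F = q) (hK : Fintype.card K = q ^ 2)
    (τ : K) (hτF : τ ∉ Set.range (algebraMap F K))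
    (c0 c1 : K → F)
    (hc : ∀ x : K, x = algebraMap F K (c0 x) + algebraMap F K (c1 x) * τ)
    {L : Type} [Field L] [Fintype L] [Algebra K L] [Algebra F L] [IsScalarTower F K L]
    (hL : Fintype.card L = q ^ 4)
    (hq4 : 4 ≤ q)
    (B : Set (PP K 3)) (hB : IsBaerSubplane F B)
    (tT : Option K) (hT : B ∩ linf K = {ptInf tT})
    (C : Set (PP K 3)) (hC : IsFqConic F C) (hCB : C ⊆ B) (hTC : ptInf tT ∉ C) :
    ∃ M5 : Matrix (Fin 5) (Fin 5) F, IsUnit M5.det ∧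
      bb c0 c1 '' C = mimg M5 (nrcVecs (Set.univ : Set F)) ∧
      mimg M5 (nrcVecs (Set.univ : Set F)) ∩ sinf F = ∅ ∧
      (∀ p ∈ mimg (M5.map (algebraMap F L)) (nrcVecs (Set.univ : Set L)),
        p ∈ sinf L →
          p ∈ glineL (algebraMap K L) τ q ∪ gqlineL (algebraMap K L) τ) ∧
      (∀ D : Set (PP K 3), IsFq2Conic D → C ⊆ D →
        (∀ tP tQ : Option K, D ∩ linf K = {ptInf tP, ptInf tQ} →
          gpt τ q tP ∈ mimg (M5.map (algebraMap F K)) (nrcVecs (Set.univ : Set K)) ∧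
          gpt τ q tQ ∈ mimg (M5.map (algebraMap F K)) (nrcVecs (Set.univ : Set K))) ∧
        (∀ tP : Option K, D ∩ linf K = {ptInf tP} →
          mimg (M5.map (algebraMap F K)) (nrcVecs (Set.univ : Set K)) ∩ gline τ q
            = {gpt τ q tP}) ∧
        (D ∩ linf K = ∅ →
          mimg (M5.map (algebraMap F K)) (nrcVecs (Set.univ : Set K)) ∩ sinf K
            = ∅ ∧
          (mimg (M5.map (algebraMap F L)) (nrcVecs (Set.univ : Set L)) ∩
            glineL (algebraMap K L) τ q).ncard = 2 ∧
          mimg (M5.map (algebraMap F L)) (nrcVecs (Set.univ : Set L)) ∩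
            gKinL (algebraMap K L) τ q = ∅)) := by
  subst hq
  obtain ⟨N, hN, rfl⟩ := hB
  obtain ⟨A, hA, rfl⟩ := hC
  have h_conic : mimg A (conicVecs (Set.range (algebraMap F K))) ∩ linf K = ∅ :=
    Set.eq_empty_of_forall_notMem fun p ⟨hp, hp_inf⟩ => hTC (hT.subset ⟨hCB hp, hp_inf⟩ ▸ hp)
  obtain ⟨M, hM, h⟩ := exists_isBruckBoseCurve_frobenius (by omega) hK hτF hA hN hCB h_conic
    (hT ▸ Set.subsingleton_singleton)
  have h_ext : IsBruckBoseCurve (algebraMap K L τ) _ _ _ _ := h.map_algebraMap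
  have h_image := image_bb_mimg_conicVecs (conj := FiniteField.frobeniusAlgHom F K) h hc h_conic
  refine ⟨M, hM, h_image, h_image ▸ image_bb_inter_sinf_eq_empty .., ?_, ?_⟩
  · rw [glineL_eq_gline, gqlineL_eq_gqline]
    exact fun p => h_ext.mem_gline_union_gqline
  rintro _ ⟨P, hP, rfl⟩ hCP
  rw [mimg_conicVecs_univ_eq_of_subset hq4 hA hP hCP]
  refine ⟨fun tP tQ hPQ => ?_, fun tP => h.inter_gline_eq_singleton, fun h_empty => ⟨?_, ?_, ?_⟩⟩
  · rw [h.gpt_mem_iff, h.gpt_mem_iff]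
    exact ⟨(hPQ.superset (.inl rfl)).1, (hPQ.superset (.inr rfl)).1⟩
  · exact h.inter_sinf_eq_empty h_empty (mimg_map_conicVecs_univ_inter_linf_eq_empty
      (frobeniusAlgHom_involutive hK).bijective hA h_empty)
  · rw [glineL_eq_gline, h_ext.ncard_inter_gline]
    have h_finrank : Module.finrank K L = 2 := finrank_eq_two_of_card_eq_sq (by rw [hL, hK]; ring)
    exact ncard_mimg_map_conicVecs_univ_inter_linf_eq_two h_finrank.symm.dvd hA h_empty
  · exact h_ext.inter_gKinL_eq_empty h_empty

/-- An `F_q`-conic `C` avoiding `T̄` in a Baer subplane tangent to `ℓ∞` at `T̄`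
corresponds in `PG(4,q)` to a `g`-special or `g✶`-special 4-dimensional normal rational
curve, the points of `g` on the extended curve corresponding to the points of
`C⁺ ∩ ℓ∞`. -/
theorem statement_18
    {F K : Type} [Field F] [Field K] [Fintype F] [Fintype K] [Algebra F K]
    (q : ℕ) (hq : Fintype.card F = q) (hK : Fintype.card K = q ^ 2)
    (τ : K) (t0 t1 : F)
    (hτ : τ ^ 2 = algebraMap F K t1 * τ + algebraMap F K t0)
    (hτF : τ ∉ Set.range (algebraMap F K))
    (c0 c1 : K → F)
    (hc : ∀ x : K, x = algebraMap F K (c0 x) + algebraMap F K (c1 x) * τ)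
    {L : Type} [Field L] [Fintype L] [Algebra K L] [Algebra F L] [IsScalarTower F K L]
    (hL : Fintype.card L = q ^ 4)
    (hq7 : 7 < q)
    (B : Set (PP K 3)) (hB : IsBaerSubplane F B)
    (tT : Option K) (hT : B ∩ linf K = {ptInf tT})
    (C : Set (PP K 3)) (hC : IsFqConic F C) (hCB : C ⊆ B) (hTC : ptInf tT ∉ C) :
    ∃ M5 : Matrix (Fin 5) (Fin 5) F, IsUnit M5.det ∧
      bb c0 c1 '' C = mimg M5 (nrcVecs (Set.univ : Set F)) ∧
      mimg M5 (nrcVecs (Set.univ : Set F)) ∩ sinf F = ∅ ∧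
      (∀ p ∈ mimg (M5.map (algebraMap F L)) (nrcVecs (Set.univ : Set L)),
        p ∈ sinf L →
          p ∈ glineL (algebraMap K L) τ q ∪ gqlineL (algebraMap K L) τ) ∧
      (∀ D : Set (PP K 3), IsFq2Conic D → C ⊆ D →
        (∀ tP tQ : Option K, ptInf tP ≠ ptInf tQ →
          D ∩ linf K = {ptInf tP, ptInf tQ} →
            gpt τ q tP ∈
              mimg (M5.map (algebraMap F K)) (nrcVecs (Set.univ : Set K)) ∧
            gpt τ q tQ ∈
              mimg (M5.map (algebraMap F K)) (nrcVecs (Set.univ : Set K))) ∧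
        (∀ tP : Option K, D ∩ linf K = {ptInf tP} →
          mimg (M5.map (algebraMap F K)) (nrcVecs (Set.univ : Set K)) ∩ gline τ q
            = {gpt τ q tP}) ∧
        (D ∩ linf K = ∅ →
          mimg (M5.map (algebraMap F K)) (nrcVecs (Set.univ : Set K)) ∩ sinf K
            = ∅ ∧
          (mimg (M5.map (algebraMap F L)) (nrcVecs (Set.univ : Set L)) ∩
            glineL (algebraMap K L) τ q).ncard = 2 ∧
          mimg (M5.map (algebraMap F L)) (nrcVecs (Set.univ : Set L)) ∩
            gKinL (algebraMap K L) τ q = ∅)) := by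
  obtain ⟨M5, hM5, h_image, h_affine, h_inf, h⟩ := statement_18_general q hq hK τ hτF c0 c1 hc hL
    (by omega) B hB tT hT C hC hCB hTC
  exact ⟨M5, hM5, h_image, h_affine, h_inf, fun D hD hCD =>
    ⟨fun tP tQ _ => (h D hD hCD).1 tP tQ, (h D hD hCD).2⟩⟩

end BaerConics
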